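/- Let (X, p_X) be a binary memoryless source. For β ∈ (0, 1/2), n ∈ ℕ, N = 2^n, δ_N = 2^{−N^β}, let G_N be the n-fold Kronecker power of the matrix [[1,0],[1,1]] over F₂, set A^N = X^N G_N, V_X = {i ∈ {1,…,N} : H(A_i | A^{i−1}) > 1 − δ_N}, and H_X = {i ∈ {1,…,N} : H(A_i | A^{i−1}) > δ_N}. Define the polar-based encoder φ_N(X^N, U) = [A^N[V_X], A^N[H_X \ V_X] ⊕ U], where U is a uniformly distributed seed of |H_X \ V_X| bits independent of X^N and shared with the decoder. Then for any R > H(X), the rate R is achievable by this sequence of codes: the seed rate |H_X \ V_X| / N → 0, the output length satisfies (1/N)(|V_X| + |H_X \ V_X|) → H(X) ≤ R eventually, the Kullback–Leibler divergence between the distribution of the encoder output and the uniform distribution on its range tends to 0, and there exist decoders ψ_N taking the encoder output and the seed such that P[X^N ≠ ψ_N(φ_N(X^N, U), U)] → 0 as N → ∞. -/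

import Mathlib

open Finset Filter Real

attribute [local instance] Classical.propDecidable

noncomputable section

/-- `p` is a probability mass function on the finite type `α`. -/
def IsPMF {α : Type*} [Fintype α] (p : α → ℝ) : Prop :=
  (∀ a, 0 ≤ p a) ∧ ∑ a, p a = 1

/-- i.i.d. (product) distribution of `n` copies of a source with pmf `p`. -/
def iid {α : Type*} [Fintype α] (p : α → ℝ) (n : ℕ) : (Fin n → α) → ℝ :=
  fun x => ∏ i, p (x i)

/-- variational distance between two pmfs -/
def VD {α : Type*} [Fintype α] (p q : α → ℝ) : ℝ := ∑ a, |p a - q a|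

/-- Shannon entropy, base 2 -/
def Hsh {α : Type*} [Fintype α] (p : α → ℝ) : ℝ := - ∑ a, p a * Real.logb 2 (p a)

/-- Rényi entropy of order 2, base 2 -/
def H2 {α : Type*} [Fintype α] (p : α → ℝ) : ℝ := - Real.logb 2 (∑ a, (p a) ^ 2)

/-- min-entropy, base 2 -/
def Hinf {α : Type*} [Fintype α] (p : α → ℝ) : ℝ := - Real.logb 2 (⨆ a, p a)

/-- Kullback–Leibler divergence, base 2 -/
def KL {α : Type*} [Fintype α] (p q : α → ℝ) : ℝ := ∑ a, p a * Real.logb 2 (p a / q a)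

/-- pushforward of a pmf along a map -/
def push {α β : Type*} [Fintype α] [Fintype β] (p : α → ℝ) (f : α → β) : β → ℝ :=
  fun b => ∑ a, if f a = b then p a else 0

/-- conditional mutual information `I(X;Y|Q)` of a joint pmf on `Q × X × Y`, base 2:
`I(X;Y|Q) = H(Q,X) + H(Q,Y) - H(Q) - H(Q,X,Y)`. -/
def condMI {Q X Y : Type*} [Fintype Q] [Fintype X] [Fintype Y] (p : Q × X × Y → ℝ) : ℝ :=
  Hsh (fun qx : Q × X => ∑ y, p (qx.1, qx.2, y))
    + Hsh (fun qy : Q × Y => ∑ x, p (qy.1, x, qy.2))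
    - Hsh (fun q : Q => ∑ x, ∑ y, p (q, x, y))
    - Hsh p

/-- the set of `ε`-letter-typical sequences of length `n` -/
def typ {α : Type*} [Fintype α] (p : α → ℝ) (n : ℕ) (ε : ℝ) : Finset (Fin n → α) :=
  Finset.univ.filter fun x =>
    ∀ a, |((Finset.univ.filter fun i => x i = a).card : ℝ) / n - p a| ≤ ε * p a

/-- cumulative distribution function of the standard normal distribution -/
def stdΦ (x : ℝ) : ℝ := ∫ t in Set.Iic x, Real.exp (-(t ^ 2) / 2) / Real.sqrt (2 * Real.pi)

/-- `⌈2^r⌉₊`, the size of a message set `{1,…,2^r}` -/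
def e2 (r : ℝ) : ℕ := ⌈(2:ℝ) ^ r⌉₊


/-- the polar transform `G_N = [[1,0],[1,1]]^{⊗n}` over `F₂`, `N = 2^n` -/
def polarG : (n : ℕ) → Matrix (Fin (2 ^ n)) (Fin (2 ^ n)) (ZMod 2)
  | 0 => 1
  | n + 1 =>
    Matrix.reindex (finProdFinEquiv.trans (finCongr (pow_succ 2 n).symm))
                   (finProdFinEquiv.trans (finCongr (pow_succ 2 n).symm))
      (Matrix.kroneckerMap (· * ·) (polarG n) (Matrix.of ![![1, 0], ![1, 1]]))

/-- the distribution of `A^N = X^N G_N` for an i.i.d. source `X` -/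
def polarA (pX : ZMod 2 → ℝ) (n : ℕ) : (Fin (2 ^ n) → ZMod 2) → ℝ :=
  push (iid pX (2 ^ n)) (fun x => Matrix.vecMul x (polarG n))

/-- conditional entropy `H(A_i | A^{i-1})` of the polarized source -/
def polarCondH (pX : ZMod 2 → ℝ) (n : ℕ) (i : Fin (2 ^ n)) : ℝ :=
  Hsh (push (polarA pX n) (fun a => fun j : Fin ((i : ℕ) + 1) => a (Fin.castLE i.isLt j)))
    - Hsh (push (polarA pX n) (fun a => fun j : Fin (i : ℕ) => a (Fin.castLE i.isLt.le j)))

/-- `δ_N = 2^{-N^β}` -/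
def polarδ (n : ℕ) (β : ℝ) : ℝ := (2:ℝ) ^ (-(((2:ℝ) ^ n) ^ β))

/-- the very-high-entropy set `V_X` -/
def polarV (pX : ZMod 2 → ℝ) (β : ℝ) (n : ℕ) : Finset (Fin (2 ^ n)) :=
  Finset.univ.filter fun i => 1 - polarδ n β < polarCondH pX n i

/-- the high-entropy set `H_X` -/
def polarH (pX : ZMod 2 → ℝ) (β : ℝ) (n : ℕ) : Finset (Fin (2 ^ n)) :=
  Finset.univ.filter fun i => polarδ n β < polarCondH pX n i

/-!
The polar transform iterates the step `(X₁, X₂) ↦ (X₁ + X₂, X₂)`, so the law of a bit `A_i` given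
its predecessors evolves along a binary tree. Let `Z` be the Bhattacharyya parameter of such a bit
and `T` the variational distance between its two values. One of the two steps squares `Z` and
sends `T` to at most `2 T - T ^ 2`, the other does the converse, and `Z ^ 2 + T ^ 2 ≤ 1`
throughout. Hence the mean of `√(Z T)` decays exponentially in the depth, and at most nodes one of
the parameters is exponentially small. From there on, the exponent of the small parameter doubles
at about half of the steps and loses at most one at the others, so that for each `b < 1 / 2` it
exceeds `N ^ b` with probability tending to one. Since `1 - T ≤ H(A_i | A^{i-1}) ≤ 4 Z`, the
fraction of indices in `H_X \ V_X` tends to zero.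

The seed is a one-time pad, so the divergence of the encoder output from the uniform distribution
is `|V_X| - H(A[V_X])`, at most the sum over `V_X` of `1 - H(A_i | A^{i-1})` by the chain rule.
Maximum a posteriori decoding errs with probability at most the entropy of `X^N` given
`A[H_X ∪ V_X]`, hence at most the sum of `H(A_i | A^{i-1})` over the remaining indices. Both sums
are at most `N δ_N`, which tends to zero.
-/

/-! ### Functionals of a mass split in two -/

/-- The binary entropy of a mass `a + b` split into `a` and `b`, homogeneous of degree one:
`(a + b) h(a / (a + b))` with `h` the binary entropy function. -/
def splitEntropy (a b : ℝ) : ℝ :=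
  (a + b) * logb 2 (a + b) - a * logb 2 a - b * logb 2 b

/-- The Bhattacharyya overlap of the two masses `a` and `b`. -/
def bhattacharyya (a b : ℝ) : ℝ := 2 * √(a * b)

/-- The variational distance between the two masses `a` and `b`. -/
def bias (a b : ℝ) : ℝ := |a - b|

lemma bhattacharyya_nonneg (a b : ℝ) : 0 ≤ bhattacharyya a b := by
  unfold bhattacharyya; positivity

lemma bias_nonneg (a b : ℝ) : 0 ≤ bias a b := abs_nonneg _

lemma bhattacharyya_sq {a b : ℝ} (ha : 0 ≤ a) (hb : 0 ≤ b) :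
    bhattacharyya a b ^ 2 = 4 * (a * b) := by
  rw [bhattacharyya, mul_pow, sq_sqrt (mul_nonneg ha hb)]; norm_num

lemma bhattacharyya_le_add {a b : ℝ} (ha : 0 ≤ a) (hb : 0 ≤ b) : bhattacharyya a b ≤ a + b :=
  abs_le_of_sq_le_sq' (by rw [bhattacharyya_sq ha hb]; nlinarith [sq_nonneg (a - b)])
    (add_nonneg ha hb) |>.2

lemma mul_log_sub_log_le {x y : ℝ} (hx : 0 ≤ x) (hy : 0 ≤ y) (hxy : y = 0 → x = 0) :
    x * (log y - log x) ≤ y - x := by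
  rcases hx.eq_or_lt with rfl | hx
  · simpa using hy
  have hy : 0 < y := hy.lt_of_ne fun h => hx.ne' (hxy h.symm)
  rw [← log_div hy.ne' hx.ne']
  calc x * log (y / x) ≤ x * (y / x - 1) := by
        gcongr; exact log_le_sub_one_of_pos (div_pos hy hx)
    _ = y - x := by field_simp

lemma sum_mul_logb_sub_logb_le {ι : Type*} (s : Finset ι) {c : ℝ} (hc : 1 < c) {a b : ι → ℝ}
    (ha : ∀ i ∈ s, 0 ≤ a i) (hb : ∀ i ∈ s, 0 ≤ b i) (hab : ∀ i ∈ s, b i = 0 → a i = 0) :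
    ∑ i ∈ s, a i * (logb c (b i) - logb c (a i)) ≤
      (∑ i ∈ s, a i) * (logb c (∑ i ∈ s, b i) - logb c (∑ i ∈ s, a i)) := by
  set A := ∑ i ∈ s, a i
  set B := ∑ i ∈ s, b i
  rcases (show 0 ≤ A from sum_nonneg ha).eq_or_lt with hA | hA
  · have ha0 : ∀ i ∈ s, a i = 0 := (sum_eq_zero_iff_of_nonneg ha).1 hA.symm
    rw [← hA, zero_mul, sum_eq_zero fun i hi => by rw [ha0 i hi, zero_mul]]
  obtain ⟨j, hj, hAj⟩ := exists_lt_of_sum_lt (by simpa using hA : ∑ _i ∈ s, (0 : ℝ) < A)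
  have hB : 0 < B := sum_pos' hb ⟨j, hj, (hb j hj).lt_of_ne fun h => hAj.ne' (hab j hj h.symm)⟩
  -- The tangent line of `log` at `B / A` bounds every term, and the bounds add up to zero.
  have tangent : ∀ i ∈ s, a i * (log (b i) - log (a i)) ≤
      a i * (log B - log A) + (b i * (A / B) - a i) := by
    intro i hi
    have h := mul_log_sub_log_le (ha i hi) (mul_nonneg (hb i hi) (div_pos hA hB).le)
      fun h => hab i hi ((mul_eq_zero.1 h).resolve_right (div_pos hA hB).ne')
    rcases (hb i hi).eq_or_lt with h0 | h0
    · simp [hab i hi h0.symm, ← h0]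
    · rw [log_mul h0.ne' (div_pos hA hB).ne', log_div hA.ne' hB.ne'] at h
      linarith
  have hlog : ∑ i ∈ s, a i * (log (b i) - log (a i)) ≤ A * (log B - log A) := by
    refine (sum_le_sum tangent).trans_eq ?_
    rw [sum_add_distrib, sum_sub_distrib, ← sum_mul, ← sum_mul]
    change A * _ + (B * (A / B) - A) = _
    field_simp
    ring
  simpa only [logb, ← sub_div, ← mul_div_assoc, ← sum_div] using
    div_le_div_of_nonneg_right hlog (log_pos hc).le

lemma splitEntropy_eq (a b : ℝ) :
    splitEntropy a b =
      a * (logb 2 (a + b) - logb 2 a) + b * (logb 2 (a + b) - logb 2 b) := by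
  unfold splitEntropy; ring

lemma splitEntropy_comm (a b : ℝ) : splitEntropy a b = splitEntropy b a := by
  simp only [splitEntropy, add_comm a b]; ring

lemma sum_splitEntropy_le {ι : Type*} (s : Finset ι) {a b : ι → ℝ}
    (ha : ∀ i ∈ s, 0 ≤ a i) (hb : ∀ i ∈ s, 0 ≤ b i) :
    ∑ i ∈ s, splitEntropy (a i) (b i) ≤ splitEntropy (∑ i ∈ s, a i) (∑ i ∈ s, b i) := by
  have hab : ∀ i ∈ s, 0 ≤ a i + b i := fun i hi => add_nonneg (ha i hi) (hb i hi)
  simp only [splitEntropy_eq, sum_add_distrib]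
  have hleft := sum_mul_logb_sub_logb_le s one_lt_two ha hab
    fun i hi h => by linarith [ha i hi, hb i hi]
  have hright := sum_mul_logb_sub_logb_le s one_lt_two hb hab
    fun i hi h => by linarith [ha i hi, hb i hi]
  rw [sum_add_distrib] at hleft hright
  exact add_le_add hleft hright

lemma splitEntropy_add_le {a b c d : ℝ} (ha : 0 ≤ a) (hb : 0 ≤ b) (hc : 0 ≤ c) (hd : 0 ≤ d) :
    splitEntropy a b + splitEntropy c d ≤ splitEntropy (a + c) (b + d) := by
  have h := sum_splitEntropy_le univ (a := ![a, c]) (b := ![b, d])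
    (by simp [Fin.forall_fin_two, ha, hc]) (by simp [Fin.forall_fin_two, hb, hd])
  simpa [Fin.sum_univ_two] using h

lemma splitEntropy_self (a : ℝ) : splitEntropy a a = 2 * a := by
  rcases eq_or_ne a 0 with rfl | ha
  · simp [splitEntropy]
  · rw [splitEntropy, ← two_mul, logb_mul two_ne_zero ha, logb_self_eq_one one_lt_two]
    ring

lemma splitEntropy_nonneg {a b : ℝ} (ha : 0 ≤ a) (hb : 0 ≤ b) : 0 ≤ splitEntropy a b := by
  simpa [splitEntropy] using splitEntropy_add_le ha le_rfl le_rfl hb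

lemma splitEntropy_le_add {a b : ℝ} (ha : 0 ≤ a) (hb : 0 ≤ b) : splitEntropy a b ≤ a + b := by
  have h := splitEntropy_add_le ha hb hb ha
  rw [splitEntropy_comm b a, add_comm b a, splitEntropy_self] at h
  linarith

lemma add_sub_bias_le_splitEntropy {a b : ℝ} (ha : 0 ≤ a) (hb : 0 ≤ b) :
    a + b - bias a b ≤ splitEntropy a b := by
  wlog hab : a ≤ b generalizing a b
  · have h := this hb ha (le_of_not_ge hab)
    rwa [splitEntropy_comm, bias, abs_sub_comm, add_comm] at h
  have h := splitEntropy_add_le ha ha le_rfl (sub_nonneg.2 hab)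
  have hrest : 0 ≤ splitEntropy 0 (b - a) := splitEntropy_nonneg le_rfl (sub_nonneg.2 hab)
  rw [splitEntropy_self, add_zero, add_sub_cancel] at h
  rw [bias, abs_of_nonpos (sub_nonpos.2 hab)]
  linarith

lemma mul_log_add_sub_log_le {a b : ℝ} (ha : 0 ≤ a) (hb : 0 ≤ b) :
    a * (log (a + b) - log a) ≤ bhattacharyya a b := by
  unfold bhattacharyya
  rcases ha.eq_or_lt with rfl | ha
  · simp
  have hsa := sqrt_pos.2 ha
  have hsb := sqrt_nonneg b
  have hle : a + b ≤ (√a + √b) ^ 2 := by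
    nlinarith [sq_sqrt ha.le, sq_sqrt hb, mul_nonneg hsa.le hsb]
  calc a * (log (a + b) - log a)
      ≤ a * (log ((√a + √b) ^ 2) - log (√a ^ 2)) := by rw [sq_sqrt ha.le]; gcongr
    _ = 2 * √a * (√a * (log (√a + √b) - log √a)) := by
        rw [log_pow, log_pow]; push_cast; linear_combination
          (-2) * (log (√a + √b) - log √a) * sq_sqrt ha.le
    _ ≤ 2 * √a * (√a + √b - √a) := by
        gcongr
        exact mul_log_sub_log_le hsa.le (by positivity) fun h => by linarith
    _ = 2 * √(a * b) := by rw [sqrt_mul ha.le]; ring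

lemma splitEntropy_le_four_mul_bhattacharyya {a b : ℝ} (ha : 0 ≤ a) (hb : 0 ≤ b) :
    splitEntropy a b ≤ 4 * bhattacharyya a b := by
  have hleft := mul_log_add_sub_log_le ha hb
  have hright := mul_log_add_sub_log_le hb ha
  have hsymm : bhattacharyya b a = bhattacharyya a b := by simp only [bhattacharyya, mul_comm]
  rw [hsymm, add_comm b a] at hright
  rw [splitEntropy_eq]
  simp only [logb, ← sub_div, ← mul_div_assoc, ← add_div]
  rw [div_le_iff₀ (log_pos one_lt_two)]
  nlinarith [log_two_gt_d9, bhattacharyya_nonneg a b]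

lemma bhattacharyya_mix_le {a b c d : ℝ} (ha : 0 ≤ a) (hb : 0 ≤ b) (hc : 0 ≤ c) (hd : 0 ≤ d) :
    bhattacharyya (a * c + b * d) (b * c + a * d) ≤
      bhattacharyya a b * (c + d) + (a + b) * bhattacharyya c d -
        bhattacharyya a b * bhattacharyya c d := by
  have hxsq := bhattacharyya_sq ha hb
  have hysq := bhattacharyya_sq hc hd
  have hx := sub_nonneg.2 (bhattacharyya_le_add ha hb)
  have hy := sub_nonneg.2 (bhattacharyya_le_add hc hd)
  have hx0 := bhattacharyya_nonneg a b
  have hy0 := bhattacharyya_nonneg c d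
  have hsq : bhattacharyya (a * c + b * d) (b * c + a * d) ^ 2 =
      bhattacharyya a b ^ 2 * (c + d) ^ 2 + (a + b) ^ 2 * bhattacharyya c d ^ 2 -
        bhattacharyya a b ^ 2 * bhattacharyya c d ^ 2 := by
    rw [bhattacharyya_sq (by positivity) (by positivity), hxsq, hysq]; ring
  refine abs_le_of_sq_le_sq' ?_ ?_ |>.2
  · rw [hsq]
    nlinarith [mul_nonneg (mul_nonneg hx0 hy0) (mul_nonneg hx hy)]
  · nlinarith [mul_nonneg hx0 hy, mul_nonneg (add_nonneg ha hb) hy0]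

lemma bias_add_bias_le {a b c d : ℝ} (ha : 0 ≤ a) (hb : 0 ≤ b) (hc : 0 ≤ c) (hd : 0 ≤ d) :
    bias (a * c) (b * d) + bias (b * c) (a * d) ≤
      bias a b * (c + d) + (a + b) * bias c d - bias a b * bias c d := by
  have hab : bias a b ≤ a + b := abs_sub_le_iff.2 ⟨by linarith, by linarith⟩
  have hcd : bias c d ≤ c + d := abs_sub_le_iff.2 ⟨by linarith, by linarith⟩
  have hmax : bias (a * c) (b * d) + bias (b * c) (a * d) ≤
      max ((a + b) * bias c d) (bias a b * (c + d)) := by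
    have hadd : |a * c - b * d + (b * c - a * d)| = (a + b) * bias c d := by
      rw [bias, ← abs_of_nonneg (add_nonneg ha hb), ← abs_mul]; ring_nf
    have hsub : |a * c - b * d - (b * c - a * d)| = bias a b * (c + d) := by
      rw [bias, ← abs_of_nonneg (add_nonneg hc hd), ← abs_mul]; ring_nf
    rw [← hadd, ← hsub]
    rcases abs_choice (a * c - b * d) with h | h <;>
      rcases abs_choice (b * c - a * d) with h' | h' <;>
      grind [bias]
  refine hmax.trans (max_le ?_ ?_)
  · linarith [mul_nonneg (bias_nonneg a b) (sub_nonneg.2 hcd)]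
  · nlinarith [mul_nonneg (bias_nonneg c d) (sub_nonneg.2 hab)]

/-! ### Finite laws -/

section FiniteLaws

variable {α β γ δ : Type*} [Fintype α] [Fintype β] [Fintype γ] [Fintype δ]

/-- The law of a pair of independent variables with laws `p` and `q`. -/
def prodLaw (p : α → ℝ) (q : β → ℝ) : α × β → ℝ := fun w => p w.1 * q w.2

lemma push_nonneg {p : α → ℝ} (hp : ∀ a, 0 ≤ p a) (f : α → β) (b : β) : 0 ≤ push p f b :=
  sum_nonneg fun a _ => by split_ifs <;> simp [hp a]

lemma sum_push_mul (p : α → ℝ) (f : α → β) (g : β → ℝ) :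
    ∑ b, push p f b * g b = ∑ a, p a * g (f a) := by
  simp only [push, sum_mul]
  rw [sum_comm]
  simp [ite_mul]

lemma sum_push (p : α → ℝ) (f : α → β) : ∑ b, push p f b = ∑ a, p a := by
  simpa using sum_push_mul p f 1

lemma push_push (p : α → ℝ) (f : α → β) (g : β → γ) :
    push (push p f) g = push p (fun a => g (f a)) := by
  ext c
  simpa [push] using sum_push_mul p f fun b => if g b = c then 1 else 0

lemma push_injective_apply (p : α → ℝ) (f : α → β) {e : β → γ} (he : e.Injective) (b : β) :
    push p (fun a => e (f a)) (e b) = push p f b := by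
  simp only [push, he.eq_iff]

lemma push_eq_zero_of_notMem_range (p : α → ℝ) {f : α → β} {b : β} (hb : b ∉ Set.range f) :
    push p f b = 0 :=
  sum_eq_zero fun a _ => if_neg fun h => hb ⟨a, h⟩

lemma push_equiv_apply (p : α → ℝ) (e : α ≃ β) (b : β) : push p e b = p (e.symm b) := by
  simp [push, ← Equiv.eq_symm_apply]

lemma push_snd_apply (p : α × β → ℝ) (b : β) : push p Prod.snd b = ∑ a, p (a, b) := by
  simp [push, Fintype.sum_prod_type]

lemma push_map_prodLaw (p : α → ℝ) (q : β → ℝ) (f : α → γ) (g : β → δ) :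
    push (prodLaw p q) (Prod.map f g) = prodLaw (push p f) (push q g) := by
  ext ⟨c, d⟩
  simp only [push, prodLaw, Fintype.sum_prod_type, sum_mul_sum, Prod.map_apply, Prod.mk.injEq,
    ite_and, ite_mul, mul_ite, zero_mul, mul_zero]
  exact sum_congr rfl fun a _ => sum_congr rfl fun b _ => by split_ifs <;> rfl

lemma IsPMF.push {p : α → ℝ} (hp : IsPMF p) (f : α → β) : IsPMF (push p f) :=
  ⟨push_nonneg hp.1 f, (sum_push p f).trans hp.2⟩

lemma IsPMF.prodLaw {p : α → ℝ} {q : β → ℝ} (hp : IsPMF p) (hq : IsPMF q) :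
    IsPMF (prodLaw p q) :=
  ⟨fun w => mul_nonneg (hp.1 w.1) (hq.1 w.2), by
    simp only [_root_.prodLaw, Fintype.sum_prod_type, ← sum_mul_sum, hp.2, hq.2, mul_one]⟩

lemma IsPMF.iid {p : α → ℝ} (hp : IsPMF p) (n : ℕ) : IsPMF (iid p n) :=
  ⟨fun x => prod_nonneg fun i _ => hp.1 (x i),
    (Fintype.sum_pow p n).symm.trans (by rw [hp.2, one_pow])⟩

lemma Hsh_push (p : α → ℝ) (f : α → β) :
    Hsh (push p f) = -∑ a, p a * logb 2 (push p f (f a)) :=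
  congrArg Neg.neg (sum_push_mul p f fun b => logb 2 (push p f b))

lemma Hsh_push_congr (p : α → ℝ) {f : α → β} {g : α → γ}
    (h : ∀ a a', f a = f a' ↔ g a = g a') : Hsh (push p f) = Hsh (push p g) := by
  simp only [Hsh_push]
  simp only [push, h]

lemma Hsh_push_of_injective (p : α → ℝ) {f : α → β} (hf : f.Injective) :
    Hsh (push p f) = Hsh p := by
  rw [Hsh_push, Hsh]
  simp [push, hf.eq_iff]

lemma Hsh_prodLaw {p : α → ℝ} {q : β → ℝ} (hp : IsPMF p) (hq : IsPMF q) :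
    Hsh (prodLaw p q) = Hsh p + Hsh q := by
  have hlog (a : α) (b : β) : p a * q b * logb 2 (p a * q b) =
      p a * logb 2 (p a) * q b + p a * (q b * logb 2 (q b)) := by
    rcases eq_or_ne (p a) 0 with ha | ha
    · simp [ha]
    rcases eq_or_ne (q b) 0 with hb | hb
    · simp [hb]
    rw [logb_mul ha hb]; ring
  simp only [Hsh, prodLaw, Fintype.sum_prod_type, hlog, sum_add_distrib, ← sum_mul_sum, hp.2, hq.2]
  ring

lemma Hsh_iid {p : α → ℝ} (hp : IsPMF p) (n : ℕ) : Hsh (iid p n) = n * Hsh p := by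
  induction n with
  | zero => simp [Hsh, iid]
  | succ n ih =>
    have hcons : Hsh (iid p (n + 1)) = Hsh (prodLaw p (iid p n)) := by
      refine congrArg Neg.neg (Fintype.sum_equiv (Fin.consEquiv fun _ => α).symm _ _ fun x => ?_)
      simp [iid, prodLaw, Fin.consEquiv, Fin.prod_univ_succ, Fin.tail]
    rw [hcons, Hsh_prodLaw hp (hp.iid n), ih]
    push_cast
    ring

lemma KL_nonneg {p q : α → ℝ} (hp : IsPMF p) (hq : IsPMF q) (hpq : ∀ a, q a = 0 → p a = 0) :
    0 ≤ KL p q := by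
  have hlogsum := sum_mul_logb_sub_logb_le univ one_lt_two
    (fun a _ => hp.1 a) (fun a _ => hq.1 a) fun a _ => hpq a
  have hneg : KL p q = -∑ a, p a * (logb 2 (q a) - logb 2 (p a)) := by
    rw [KL, ← sum_neg_distrib]
    refine sum_congr rfl fun a _ => ?_
    rcases eq_or_ne (p a) 0 with ha | ha
    · simp [ha]
    · rw [logb_div ha fun h => ha (hpq a h)]; ring
  rw [hp.2, hq.2] at hlogsum
  rw [hneg]
  linarith

lemma KL_const {p : α → ℝ} (hp : IsPMF p) {c : ℝ} (hc : c ≠ 0) :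
    KL p (fun _ => 1 / c) = logb 2 c - Hsh p := by
  have hlog (a : α) : p a * logb 2 (p a / (1 / c)) = p a * logb 2 (p a) + p a * logb 2 c := by
    rcases eq_or_ne (p a) 0 with ha | ha
    · simp [ha]
    · rw [div_div_eq_mul_div, div_one, logb_mul ha hc, mul_add]
  simp only [KL, Hsh, hlog, sum_add_distrib, ← sum_mul, hp.2]
  ring

end FiniteLaws

/-! ### A bit with side information -/

section SideInformation

variable {Ω β γ : Type*} [Fintype Ω] [Fintype β] [Fintype γ]

/-- For the joint law `q` of a bit and some side information, the sum of `φ` over the pairs of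
masses that the two values of the bit have at each value of the side information. It is the
conditional entropy of the bit for `φ = splitEntropy`, and the Bhattacharyya parameter and the
variational distance of the bit for `φ = bhattacharyya` and `φ = bias`. -/
def condSum (φ : ℝ → ℝ → ℝ) (q : ZMod 2 × β → ℝ) : ℝ := ∑ y, φ (q (0, y)) (q (1, y))

/-- The polar transform of a bit `X` with side information `Y`: for independent copies `(X₁, Y₁)`
and `(X₂, Y₂)` with law `q`, the joint law of `X₂` and the side information
`(X₁ + X₂, Y₁, Y₂)`. -/
def plusLaw (q : ZMod 2 × β → ℝ) : ZMod 2 × ZMod 2 × β × β → ℝ :=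
  fun w => q (w.2.1 + w.1, w.2.2.1) * q (w.1, w.2.2.2)

/-- For `X₁, Y₁, X₂, Y₂` as in `plusLaw`, the joint law of `X₁ + X₂` and the side information
`(Y₁, Y₂)`. -/
def minusLaw (q : ZMod 2 × β → ℝ) : ZMod 2 × β × β → ℝ :=
  fun w => ∑ v, plusLaw q (v, w)

lemma sum_zmod_two {M : Type*} [AddCommMonoid M] (f : ZMod 2 → M) : ∑ x, f x = f 0 + f 1 :=
  Fin.sum_univ_two f

lemma sum_zmod_two_prod (q : ZMod 2 × β → ℝ) : ∑ w, q w = ∑ y, (q (0, y) + q (1, y)) := by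
  rw [Fintype.sum_prod_type_right]
  exact sum_congr rfl fun y _ => sum_zmod_two _

lemma condSum_splitEntropy (q : ZMod 2 × β → ℝ) :
    condSum splitEntropy q = Hsh q - Hsh (push q Prod.snd) := by
  simp only [condSum, Hsh, push_snd_apply, sum_zmod_two, splitEntropy, sum_zmod_two_prod,
    sum_sub_distrib, sum_add_distrib]
  ring

lemma condSum_push_injective {φ : ℝ → ℝ → ℝ} (hφ : φ 0 0 = 0) (p : Ω → ℝ) (X : Ω → ZMod 2)
    (Y : Ω → β) {e : β → γ} (he : e.Injective) :
    condSum φ (push p fun ω => (X ω, e (Y ω))) = condSum φ (push p fun ω => (X ω, Y ω)) := by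
  refine (Fintype.sum_of_injective e he _ _ (fun z hz => ?_) fun y => ?_).symm
  · have hzero (x : ZMod 2) : push p (fun ω => (X ω, e (Y ω))) (x, z) = 0 :=
      push_eq_zero_of_notMem_range p <| by
        rintro ⟨ω, hω⟩
        exact hz ⟨Y ω, congrArg Prod.snd hω⟩
    rw [hzero, hzero, hφ]
  · have hmap (x : ZMod 2) := push_injective_apply p (fun ω => (X ω, Y ω))
      (Function.injective_id.prodMap he) (x, y)
    rw [← hmap, ← hmap]
    rfl

lemma condSum_push_congr {φ : ℝ → ℝ → ℝ} (hφ : φ 0 0 = 0) (p : Ω → ℝ) (X : Ω → ZMod 2)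
    {Y : Ω → β} {Y' : Ω → γ} (h : ∀ ω ω', Y ω = Y ω' ↔ Y' ω = Y' ω') :
    condSum φ (push p fun ω => (X ω, Y ω)) = condSum φ (push p fun ω => (X ω, Y' ω)) := by
  let cls : Ω → Quotient (Setoid.ker Y) := Quotient.mk _
  let e' : Quotient (Setoid.ker Y) → γ := Quotient.lift Y' fun ω ω' hω => (h ω ω').1 hω
  have he' : e'.Injective := by
    rintro ⟨ω⟩ ⟨ω'⟩ hω
    exact Quotient.sound ((h ω ω').2 hω)
  exact (condSum_push_injective hφ p X cls (Setoid.kerLift_injective Y)).trans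
    (condSum_push_injective hφ p X cls he').symm

lemma condSum_splitEntropy_le_push {q : ZMod 2 × β → ℝ} (hq : ∀ w, 0 ≤ q w) (g : β → γ) :
    condSum splitEntropy q ≤ condSum splitEntropy (push q (Prod.map id g)) := by
  have hpush (x : ZMod 2) (z : γ) :
      push q (Prod.map id g) (x, z) = ∑ y with g y = z, q (x, y) := by
    simp only [push, Fintype.sum_prod_type, Prod.map_apply, id_eq, Prod.mk.injEq, ite_and,
      sum_filter]
    rw [sum_eq_single x (fun x' _ hx => by simp [hx]) (by simp)]
    simp
  simp only [condSum, hpush]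
  rw [← sum_fiberwise univ g]
  exact sum_le_sum fun z _ => sum_splitEntropy_le _ (fun y _ => hq _) fun y _ => hq _

lemma condSum_splitEntropy_nonneg {q : ZMod 2 × β → ℝ} (hq : ∀ w, 0 ≤ q w) :
    0 ≤ condSum splitEntropy q :=
  sum_nonneg fun _ _ => splitEntropy_nonneg (hq _) (hq _)

lemma condSum_splitEntropy_le_one {q : ZMod 2 × β → ℝ} (hq : IsPMF q) :
    condSum splitEntropy q ≤ 1 := by
  rw [← hq.2, sum_zmod_two_prod]
  exact sum_le_sum fun y _ => splitEntropy_le_add (hq.1 _) (hq.1 _)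

lemma one_sub_condSum_bias_le {q : ZMod 2 × β → ℝ} (hq : IsPMF q) :
    1 - condSum bias q ≤ condSum splitEntropy q := by
  rw [← hq.2, sum_zmod_two_prod, condSum, ← sum_sub_distrib]
  exact sum_le_sum fun y _ => add_sub_bias_le_splitEntropy (hq.1 _) (hq.1 _)

lemma condSum_splitEntropy_le_four_mul {q : ZMod 2 × β → ℝ} (hq : ∀ w, 0 ≤ q w) :
    condSum splitEntropy q ≤ 4 * condSum bhattacharyya q := by
  rw [condSum, condSum, mul_sum]
  exact sum_le_sum fun y _ => splitEntropy_le_four_mul_bhattacharyya (hq _) (hq _)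

lemma push_prodLaw_eq_plusLaw (q : ZMod 2 × β → ℝ) :
    push (prodLaw q q) (fun w => (w.2.1, w.1.1 + w.2.1, w.1.2, w.2.2)) = plusLaw q := by
  let e : (ZMod 2 × β) × (ZMod 2 × β) ≃ ZMod 2 × ZMod 2 × β × β :=
    { toFun := fun w => (w.2.1, w.1.1 + w.2.1, w.1.2, w.2.2)
      invFun := fun w => ((w.2.1 + w.1, w.2.2.1), (w.1, w.2.2.2))
      left_inv := fun w => by simp [add_assoc, CharTwo.add_self_eq_zero]
      right_inv := fun w => by simp [add_assoc, CharTwo.add_self_eq_zero] }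
  exact funext (push_equiv_apply (prodLaw q q) e)

lemma push_prodLaw_eq_minusLaw (q : ZMod 2 × β → ℝ) :
    push (prodLaw q q) (fun w => (w.1.1 + w.2.1, w.1.2, w.2.2)) = minusLaw q := by
  ext w
  rw [minusLaw, ← push_snd_apply, ← push_prodLaw_eq_plusLaw, push_push]

lemma condSum_plusLaw (φ : ℝ → ℝ → ℝ) (q : ZMod 2 × β → ℝ) :
    condSum φ (plusLaw q) = ∑ y, ∑ z,
      (φ (q (0, y) * q (0, z)) (q (1, y) * q (1, z)) +
        φ (q (1, y) * q (0, z)) (q (0, y) * q (1, z))) := by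
  simp only [condSum, plusLaw, Fintype.sum_prod_type, sum_zmod_two, ← sum_add_distrib, zero_add,
    add_zero, CharTwo.add_self_eq_zero]

lemma condSum_minusLaw (φ : ℝ → ℝ → ℝ) (q : ZMod 2 × β → ℝ) :
    condSum φ (minusLaw q) = ∑ y, ∑ z,
      φ (q (0, y) * q (0, z) + q (1, y) * q (1, z))
        (q (1, y) * q (0, z) + q (0, y) * q (1, z)) := by
  simp only [condSum, minusLaw, plusLaw, Fintype.sum_prod_type, sum_zmod_two, zero_add, add_zero,
    CharTwo.add_self_eq_zero]

lemma condSum_bhattacharyya_plusLaw {q : ZMod 2 × β → ℝ} (hq : ∀ w, 0 ≤ q w) :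
    condSum bhattacharyya (plusLaw q) = condSum bhattacharyya q ^ 2 := by
  rw [condSum_plusLaw, sq, condSum, sum_mul_sum]
  refine sum_congr rfl fun y _ => sum_congr rfl fun z _ => ?_
  have hsqrt := sqrt_mul (mul_nonneg (hq (0, y)) (hq (1, y))) (q (0, z) * q (1, z))
  simp only [bhattacharyya]
  rw [mul_mul_mul_comm, mul_mul_mul_comm (q (1, y)), mul_comm (q (1, y)), hsqrt]
  ring

lemma condSum_bias_minusLaw (q : ZMod 2 × β → ℝ) :
    condSum bias (minusLaw q) = condSum bias q ^ 2 := by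
  rw [condSum_minusLaw, sq, condSum, sum_mul_sum]
  refine sum_congr rfl fun y _ => sum_congr rfl fun z _ => ?_
  simp only [bias, ← abs_mul]
  congr 1
  ring

lemma sum_sum_mul_add_mul_sub_mul {m : β → ℝ} (hm : ∑ y, m y = 1) (f : β → ℝ) :
    ∑ y, ∑ z, (f y * m z + m y * f z - f y * f z) = 2 * ∑ y, f y - (∑ y, f y) ^ 2 := by
  simp only [sum_sub_distrib, sum_add_distrib, ← sum_mul_sum, hm]
  ring

lemma condSum_bhattacharyya_minusLaw_le {q : ZMod 2 × β → ℝ} (hq : IsPMF q) :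
    condSum bhattacharyya (minusLaw q) ≤
      2 * condSum bhattacharyya q - condSum bhattacharyya q ^ 2 := by
  have hsum : ∑ y, (q (0, y) + q (1, y)) = 1 := (sum_zmod_two_prod q).symm.trans hq.2
  rw [condSum_minusLaw, condSum, ← sum_sum_mul_add_mul_sub_mul hsum]
  exact sum_le_sum fun y _ => sum_le_sum fun z _ =>
    bhattacharyya_mix_le (hq.1 _) (hq.1 _) (hq.1 _) (hq.1 _)

lemma condSum_bias_plusLaw_le {q : ZMod 2 × β → ℝ} (hq : IsPMF q) :
    condSum bias (plusLaw q) ≤ 2 * condSum bias q - condSum bias q ^ 2 := by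
  have hsum : ∑ y, (q (0, y) + q (1, y)) = 1 := (sum_zmod_two_prod q).symm.trans hq.2
  rw [condSum_plusLaw, condSum, ← sum_sum_mul_add_mul_sub_mul hsum]
  exact sum_le_sum fun y _ => sum_le_sum fun z _ =>
    bias_add_bias_le (hq.1 _) (hq.1 _) (hq.1 _) (hq.1 _)

lemma condSum_bhattacharyya_sq_add_condSum_bias_sq_le {q : ZMod 2 × β → ℝ} (hq : IsPMF q) :
    condSum bhattacharyya q ^ 2 + condSum bias q ^ 2 ≤ 1 := by
  -- The pair `(bhattacharyya a b, bias a b)` is a planar vector of length `a + b`.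
  let v (y : β) : ℂ := ⟨bhattacharyya (q (0, y)) (q (1, y)), bias (q (0, y)) (q (1, y))⟩
  have hnorm (y : β) : ‖v y‖ = q (0, y) + q (1, y) := by
    rw [Complex.norm_def, Complex.normSq_mk, ← sq, ← sq, bhattacharyya_sq (hq.1 _) (hq.1 _), bias,
      sq_abs, ← sqrt_sq (add_nonneg (hq.1 (0, y)) (hq.1 (1, y)))]
    congr 1
    ring
  have htriangle : ‖∑ y, v y‖ ≤ 1 := by
    refine (norm_sum_le _ _).trans_eq ?_
    simp only [hnorm, ← sum_zmod_two_prod, hq.2]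
  rw [Complex.norm_def, sqrt_le_one, Complex.normSq_apply, Complex.re_sum, Complex.im_sum]
    at htriangle
  simpa only [sq, condSum] using htriangle

end SideInformation

/-! ### Averages over a binary tree -/

section Branching

variable {α : Type*} {l r : α → α}

/-- The averaging operator `f ↦ (f ∘ l + f ∘ r) / 2` of the binary tree in which the state `s` has
the children `l s` and `r s`; its `n`-th power averages over the `2 ^ n` descendants at depth
`n`. -/
def branchAvg (l r : α → α) : Module.End ℝ (α → ℝ) :=
  (1 / 2 : ℝ) • (LinearMap.funLeft ℝ ℝ l + LinearMap.funLeft ℝ ℝ r)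

/-- The proportion of the descendants of `s` at depth `n` that lie in `S`. -/
def branchProb (l r : α → α) (n : ℕ) (S : Set α) (s : α) : ℝ :=
  (branchAvg l r ^ n) (S.indicator 1) s

lemma branchAvg_comm (l r : α → α) : branchAvg l r = branchAvg r l := by
  rw [branchAvg, add_comm, ← branchAvg]

lemma branchAvg_pow_succ_apply (n : ℕ) (f : α → ℝ) (s : α) :
    (branchAvg l r ^ (n + 1)) f s =
      ((branchAvg l r ^ n) f (l s) + (branchAvg l r ^ n) f (r s)) / 2 := by
  rw [pow_succ', Module.End.mul_apply, branchAvg]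
  simp only [LinearMap.smul_apply, LinearMap.add_apply, Pi.smul_apply, Pi.add_apply,
    LinearMap.funLeft_apply, smul_eq_mul]
  ring

lemma branchAvg_pow_mono {f g : α → ℝ} (h : f ≤ g) (n : ℕ) :
    (branchAvg l r ^ n) f ≤ (branchAvg l r ^ n) g := by
  induction n with
  | zero => simpa using h
  | succ n ih =>
    intro s
    rw [branchAvg_pow_succ_apply, branchAvg_pow_succ_apply]
    linarith [ih (l s), ih (r s)]

lemma branchAvg_pow_one (n : ℕ) : (branchAvg l r ^ n) (1 : α → ℝ) = 1 := by
  induction n with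
  | zero => simp
  | succ n ih =>
    ext s
    rw [branchAvg_pow_succ_apply, ih]
    norm_num

lemma branchProb_nonneg (n : ℕ) (S : Set α) (s : α) : 0 ≤ branchProb l r n S s := by
  have h := branchAvg_pow_mono (l := l) (r := r)
    (f := 0) (Set.indicator_nonneg fun _ _ => zero_le_one : _ ≤ S.indicator 1) n s
  rwa [map_zero] at h

lemma branchProb_le_one (n : ℕ) (S : Set α) (s : α) : branchProb l r n S s ≤ 1 := by
  have h := branchAvg_pow_mono (l := l) (r := r)
    (S.indicator_le_self' fun _ _ => zero_le_one : S.indicator (1 : α → ℝ) ≤ 1) n s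
  rwa [branchAvg_pow_one] at h

lemma branchProb_mono {S T : Set α} (h : S ⊆ T) (n : ℕ) (s : α) :
    branchProb l r n S s ≤ branchProb l r n T s :=
  branchAvg_pow_mono (Set.indicator_le_indicator_of_subset h fun _ => zero_le_one) n s

lemma branchProb_succ (n : ℕ) (S : Set α) (s : α) :
    branchProb l r (n + 1) S s = (branchProb l r n S (l s) + branchProb l r n S (r s)) / 2 :=
  branchAvg_pow_succ_apply n _ s

lemma mul_branchProb_le {f : α → ℝ} (hf : 0 ≤ f) {c : ℝ} {S : Set α} (hS : ∀ s ∈ S, c ≤ f s)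
    (n : ℕ) (s : α) : c * branchProb l r n S s ≤ (branchAvg l r ^ n) f s := by
  have h : c • S.indicator 1 ≤ f := fun t => by
    by_cases ht : t ∈ S
    · simpa [ht] using hS t ht
    · simpa [ht] using hf t
  have hmono := branchAvg_pow_mono (l := l) (r := r) h n s
  rwa [map_smul] at hmono

lemma branchProb_add_le {S T : Set α} {n : ℕ} {ε : ℝ} (hε : 0 ≤ ε)
    (h : ∀ t ∈ S, branchProb l r n T t ≤ ε) (m : ℕ) (s : α) :
    branchProb l r (m + n) T s ≤ branchProb l r m Sᶜ s + ε := by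
  have hle : branchProb l r n T ≤ Sᶜ.indicator 1 + ε • 1 := fun t => by
    by_cases ht : t ∈ S
    · simpa [ht] using h t ht
    · simpa [ht] using (branchProb_le_one n T t).trans (le_add_of_nonneg_right hε)
  have hmono := branchAvg_pow_mono (l := l) (r := r) hle m s
  rw [map_add, map_smul, branchAvg_pow_one] at hmono
  rw [branchProb, pow_add]
  exact hmono.trans_eq (by simp [branchProb])

/-! ### Polarization along a binary tree -/

/-- Two opposing parameters of the states of a binary tree: a step along `r` squares `Z` and at
most doubles `T`, a step along `l` does the converse, and both cannot be large at once. -/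
structure IsPolarizing (l r : α → α) (Z T : α → ℝ) : Prop where
  nonneg_left : ∀ s, 0 ≤ Z s
  nonneg_right : ∀ s, 0 ≤ T s
  sq_add_sq_le : ∀ s, Z s ^ 2 + T s ^ 2 ≤ 1
  left_le_sq : ∀ s, Z (r s) ≤ Z s ^ 2
  left_le : ∀ s, Z (l s) ≤ 2 * Z s - Z s ^ 2
  right_le_sq : ∀ s, T (l s) ≤ T s ^ 2
  right_le : ∀ s, T (r s) ≤ 2 * T s - T s ^ 2

/-- The states at which one of the two parameters is at most `2 ^ (-e)`. -/
def polarizedSet (Z T : α → ℝ) (e : ℝ) : Set α :=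
  {s | Z s ≤ (2 : ℝ) ^ (-e) ∨ T s ≤ (2 : ℝ) ^ (-e)}

lemma polarizedSet_anti (Z T : α → ℝ) {e e' : ℝ} (h : e ≤ e') :
    polarizedSet Z T e' ⊆ polarizedSet Z T e :=
  have hpow : (2 : ℝ) ^ (-e') ≤ 2 ^ (-e) := by gcongr; exact one_le_two
  fun _ hs => hs.imp (le_trans · hpow) (le_trans · hpow)

lemma sqrt_add_sqrt_le {z t : ℝ} (hz : 0 ≤ z) (ht : 0 ≤ t) (h : z ^ 2 + t ^ 2 ≤ 1) :
    √(t * (2 - z)) + √(z * (2 - t)) ≤ 2 * (39 / 40) := by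
  have ha : 0 ≤ t * (2 - z) := mul_nonneg ht (by nlinarith)
  have hb : 0 ≤ z * (2 - t) := mul_nonneg hz (by nlinarith)
  have hadd : z + t ≤ 1.4143 := by nlinarith [sq_nonneg (z - t)]
  have : z * t ≤ 1 / 2 := by nlinarith [sq_nonneg (z - t)]
  have hmul0 : 0 ≤ z * t := mul_nonneg hz ht
  have hprod : √(t * (2 - z)) * √(z * (2 - t)) ≤ 1.90125 - (z + t) + z * t := by
    rw [← sqrt_mul ha, sqrt_le_iff]
    have hsq : (0.48 : ℝ) ^ 2 ≤ (1.90125 - (z + t)) ^ 2 := by gcongr; linarith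
    exact ⟨by linarith, by nlinarith⟩
  refine abs_le_of_sq_le_sq' ?_ (by norm_num) |>.2
  nlinarith [sq_sqrt ha, sq_sqrt hb]

lemma eventually_succ_sq_add_one_le :
    ∀ᶠ j : ℕ in atTop, ((j + 1) * (j + 1) + 1 : ℝ) ≤ 2 ^ (1 / 4 * j : ℝ) * j := by
  have hlim := tendsto_pow_const_div_const_pow_of_one_lt 1
    (one_lt_rpow one_lt_two (by norm_num : (0 : ℝ) < 1 / 4))
  filter_upwards [hlim.eventually_lt_const (by norm_num : (0 : ℝ) < 1 / 5), eventually_ge_atTop 1]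
    with j hj hj1
  rw [pow_one, div_lt_iff₀ (by positivity), ← rpow_mul_natCast two_pos.le] at hj
  have hj1' : (1 : ℝ) ≤ j := by exact_mod_cast hj1
  nlinarith

namespace IsPolarizing

variable {Z T : α → ℝ}

lemma swap (h : IsPolarizing l r Z T) : IsPolarizing r l T Z where
  nonneg_left := h.nonneg_right
  nonneg_right := h.nonneg_left
  sq_add_sq_le s := add_comm (Z s ^ 2) _ ▸ h.sq_add_sq_le s
  left_le_sq := h.right_le_sq
  left_le := h.right_le
  right_le_sq := h.left_le_sq
  right_le := h.left_le

lemma sqrt_mul_apply_left_le (h : IsPolarizing l r Z T) (s : α) :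
    √(Z (l s) * T (l s)) ≤ √(Z s * T s) * √(T s * (2 - Z s)) := by
  have hZ := h.nonneg_left s
  rw [← sqrt_mul (mul_nonneg hZ (h.nonneg_right s))]
  refine sqrt_le_sqrt ?_
  calc Z (l s) * T (l s) ≤ (2 * Z s - Z s ^ 2) * T s ^ 2 :=
        mul_le_mul (h.left_le s) (h.right_le_sq s) (h.nonneg_right _)
          ((h.nonneg_left _).trans (h.left_le s))
    _ = Z s * T s * (T s * (2 - Z s)) := by ring

lemma branchAvg_pow_sqrt_mul_le (h : IsPolarizing l r Z T) (n : ℕ) (s : α) :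
    (branchAvg l r ^ n) (fun t => √(Z t * T t)) s ≤ (39 / 40) ^ n * √(Z s * T s) := by
  induction n generalizing s with
  | zero => simp
  | succ n ih =>
    have hl := h.sqrt_mul_apply_left_le s
    have hr := h.swap.sqrt_mul_apply_left_le s
    rw [mul_comm (T (r s)), mul_comm (T s) (Z s)] at hr
    have hfactor := sqrt_add_sqrt_le (h.nonneg_left s) (h.nonneg_right s) (h.sq_add_sq_le s)
    calc (branchAvg l r ^ (n + 1)) (fun t => √(Z t * T t)) s
        ≤ ((39 / 40) ^ n * √(Z (l s) * T (l s)) + (39 / 40) ^ n * √(Z (r s) * T (r s))) / 2 := by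
          rw [branchAvg_pow_succ_apply]; gcongr <;> exact ih _
      _ ≤ ((39 / 40) ^ n * (√(Z s * T s) * √(T s * (2 - Z s))) +
            (39 / 40) ^ n * (√(Z s * T s) * √(Z s * (2 - T s)))) / 2 := by gcongr
      _ = (39 / 40) ^ n * √(Z s * T s) * (√(T s * (2 - Z s)) + √(Z s * (2 - T s))) / 2 := by ring
      _ ≤ (39 / 40) ^ n * √(Z s * T s) * (2 * (39 / 40)) / 2 := by gcongr
      _ = (39 / 40) ^ (n + 1) * √(Z s * T s) := by ring

lemma branchProb_compl_polarizedSet_le (h : IsPolarizing l r Z T) (e : ℝ) (n : ℕ) (s : α) :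
    branchProb l r n (polarizedSet Z T e)ᶜ s ≤ 2 ^ e * (39 / 40) ^ n := by
  have hlarge : ∀ t ∈ (polarizedSet Z T e)ᶜ, (2 : ℝ) ^ (-e) ≤ √(Z t * T t) := fun t ht => by
    obtain ⟨hZ, hT⟩ := not_or.1 ht
    refine le_sqrt_of_sq_le ?_
    rw [sq]
    exact mul_le_mul (not_le.1 hZ).le (not_le.1 hT).le (by positivity) (h.nonneg_left t)
  have hsqrt : √(Z s * T s) ≤ 1 :=
    sqrt_le_one.2 (by nlinarith [h.sq_add_sq_le s, sq_nonneg (Z s - T s)])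
  have hmarkov := mul_branchProb_le (l := l) (r := r) (fun t => sqrt_nonneg (Z t * T t)) hlarge n s
  rw [rpow_neg two_pos.le, inv_mul_le_iff₀ (by positivity)] at hmarkov
  refine hmarkov.trans ?_
  gcongr
  exact (h.branchAvg_pow_sqrt_mul_le n s).trans (mul_le_of_le_one_right (by positivity) hsqrt)

lemma branchProb_zero_lt_le {f : α → ℝ} {δ : ℝ} (hδ : 0 < δ) {e τ : ℝ} (he : 0 ≤ e) {s : α}
    (hs : f s ≤ 2 ^ (-e)) :
    branchProb l r 0 {t | 2 ^ (-(2 ^ τ * e)) < f t} s ≤ (-(2 * τ) - 2 * δ) ^ 2 / (2 * δ) ^ 2 := by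
  rcases le_or_gt τ 0 with hτ | hτ
  · have hle : f s ≤ 2 ^ (-(2 ^ τ * e)) := hs.trans <| by
      gcongr
      · exact one_le_two
      · exact mul_le_of_le_one_left he (rpow_le_one_of_one_le_of_nonpos one_le_two hτ)
    rw [branchProb, pow_zero, Module.End.one_apply, Set.indicator_of_notMem]
    · positivity
    · exact not_lt.2 hle
  · refine (branchProb_le_one _ _ _).trans ?_
    rw [one_le_div (by positivity)]
    nlinarith

/-- Along a path, a step along `r` doubles the exponent `e` and a step along `l` lowers it by at
most one, so it grows by the factor `2 ^ τ` unless fewer than `τ` of the `k` steps go along `r`.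
The bound is Chebyshev's for twice the number of these steps, which has variance `k`. -/
lemma branchProb_lt_left_le (h : IsPolarizing l r Z T) {δ : ℝ} (hδ : 0 < δ) {k : ℕ} {e τ : ℝ}
    {s : α} (hke : k ≤ e) (hs : Z s ≤ 2 ^ (-e)) :
    branchProb l r k {t | 2 ^ (-(2 ^ τ * (e - k))) < Z t} s ≤
      (k + (k - 2 * τ - 2 * δ) ^ 2) / (2 * δ) ^ 2 := by
  induction k generalizing e τ s with
  | zero =>
    simpa using branchProb_zero_lt_le hδ (by simpa using hke) hs
  | succ k ih =>
    push_cast at hke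
    have hleft := ih (e := e - 1) (τ := τ) (s := l s) (by linarith) <| by
      calc Z (l s) ≤ 2 * Z s - Z s ^ 2 := h.left_le s
        _ ≤ 2 * 2 ^ (-e) := by linarith [sq_nonneg (Z s)]
        _ = 2 ^ (-(e - 1)) := by
          rw [neg_sub, sub_eq_add_neg, rpow_add two_pos, rpow_one]
    have hk := k.cast_nonneg (α := ℝ)
    have hright := ih (e := 2 * e) (τ := τ - 1) (s := r s) (by linarith) <| by
      calc Z (r s) ≤ Z s ^ 2 := h.left_le_sq s
        _ ≤ (2 ^ (-e)) ^ 2 := by gcongr; exact h.nonneg_left s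
        _ = 2 ^ (-(2 * e)) := by rw [← rpow_mul_natCast two_pos.le]; push_cast; ring_nf
    have hmono : branchProb l r k {t | 2 ^ (-(2 ^ τ * (e - (k + 1 : ℕ)))) < Z t} (r s) ≤
        branchProb l r k {t | 2 ^ (-(2 ^ (τ - 1) * (2 * e - k))) < Z t} (r s) := by
      have hexponent : (2 : ℝ) ^ τ * (e - (k + 1 : ℕ)) ≤ 2 ^ (τ - 1) * (2 * e - k) := by
        rw [rpow_sub_one two_ne_zero]
        push_cast
        nlinarith [rpow_pos_of_pos two_pos τ]
      exact branchProb_mono (fun t ht => lt_of_le_of_lt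
        (rpow_le_rpow_of_exponent_le one_le_two (neg_le_neg hexponent)) ht) _ _
    rw [branchProb_succ]
    rw [sub_sub, add_comm 1 (k : ℝ), ← Nat.cast_succ] at hleft
    calc _ ≤ _ := div_le_div_of_nonneg_right (add_le_add hleft (hmono.trans hright)) two_pos.le
      _ = _ := by push_cast; ring

lemma branchProb_lt_left_le_inv (h : IsPolarizing l r Z T) {a : ℝ} (ha : a < 1 / 2) {k : ℕ}
    (hk : 0 < k) {e : ℝ} {s : α} (hke : k ≤ e) (hs : Z s ≤ 2 ^ (-e)) :
    branchProb l r k {t | 2 ^ (-(2 ^ (a * k) * (e - k))) < Z t} s ≤ ((1 - 2 * a) ^ 2 * k)⁻¹ := by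
  have : (0 : ℝ) < k := Nat.cast_pos.2 hk
  have : 0 < 1 - 2 * a := by linarith
  refine (h.branchProb_lt_left_le (δ := (1 - 2 * a) * k / 2) (by positivity) hke hs).trans_eq ?_
  field_simp
  ring

lemma branchProb_compl_polarizedSet_le_inv (h : IsPolarizing l r Z T) {a : ℝ} (ha : a < 1 / 2)
    {k : ℕ} (hk : 0 < k) {e : ℝ} {s : α} (hke : k ≤ e) (hs : s ∈ polarizedSet Z T e) :
    branchProb l r k (polarizedSet Z T (2 ^ (a * k) * (e - k)))ᶜ s ≤
      ((1 - 2 * a) ^ 2 * k)⁻¹ := by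
  rcases hs with hs | hs
  · refine le_trans ?_ (h.branchProb_lt_left_le_inv ha hk hke hs)
    exact branchProb_mono (fun t ht => not_le.1 (not_or.1 ht).1) _ _
  · refine le_trans ?_ (h.swap.branchProb_lt_left_le_inv ha hk hke hs)
    rw [branchProb, branchAvg_comm]
    exact branchProb_mono (fun t ht => not_le.1 (not_or.1 ht).2) _ _

/-- The exponent first grows linearly in `j`, which is enough for it to survive `j` further steps
and to become exponential in `j`; that in turn is enough for it to survive all remaining `k`
steps. The `64` makes `4 * (39 / 40) ^ 64` less than one. -/
lemma branchProb_compl_polarizedSet_le_add (h : IsPolarizing l r Z T) {a : ℝ} (ha : a < 1 / 2)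
    {j k : ℕ} (hj : 0 < j) (hk : 0 < k) (hjk : k + 1 ≤ 2 ^ (1 / 4 * j : ℝ) * (j : ℝ)) (s : α) :
    branchProb l r (64 * j + j + k) (polarizedSet Z T (2 ^ (a * k)))ᶜ s ≤
      (4 * (39 / 40) ^ 64) ^ j + 4 * (j : ℝ)⁻¹ + ((1 - 2 * a) ^ 2 * k)⁻¹ := by
  have hlinear : branchProb l r (64 * j) (polarizedSet Z T (2 * j))ᶜ s ≤
      (4 * (39 / 40) ^ 64) ^ j := by
    refine (h.branchProb_compl_polarizedSet_le _ _ s).trans_eq ?_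
    rw [rpow_mul two_pos.le, rpow_natCast, mul_pow, ← pow_mul]
    norm_num
  have hexp : branchProb l r (64 * j + j) (polarizedSet Z T (2 ^ (1 / 4 * j : ℝ) * j))ᶜ s ≤
      (4 * (39 / 40) ^ 64) ^ j + 4 * (j : ℝ)⁻¹ := by
    refine (branchProb_add_le (by positivity) (fun t ht => ?_) _ s).trans
      (add_le_add_left hlinear _)
    have hstep := h.branchProb_compl_polarizedSet_le_inv (a := 1 / 4) (by norm_num) hj
      (by linarith [j.cast_nonneg (α := ℝ)]) ht
    rw [show (2 * j - j : ℝ) = j by ring] at hstep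
    refine hstep.trans_eq ?_
    rw [mul_inv]
    norm_num
  refine (branchProb_add_le (by positivity) (fun t ht => ?_) _ s).trans (add_le_add_left hexp _)
  refine le_trans (branchProb_mono (Set.compl_subset_compl.2 (polarizedSet_anti Z T ?_)) _ _)
    (h.branchProb_compl_polarizedSet_le_inv ha hk (by linarith) ht)
  exact le_mul_of_one_le_right (by positivity) (by linarith)

lemma tendsto_branchProb_compl_polarizedSet (h : IsPolarizing l r Z T) {b : ℝ} (hb : b < 1 / 2)
    (s : α) :
    Tendsto (fun n : ℕ => branchProb l r n (polarizedSet Z T (2 ^ (b * n)))ᶜ s) atTop (nhds 0) := by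
  obtain ⟨a, hba, ha⟩ := exists_between (max_lt hb one_half_pos)
  obtain ⟨hba, ha0⟩ := max_lt_iff.1 hba
  let bound (j : ℕ) : ℝ :=
    (4 * (39 / 40) ^ 64) ^ j + 4 * (j : ℝ)⁻¹ + ((1 - 2 * a) ^ 2)⁻¹ * (j : ℝ)⁻¹
  have hbound : Tendsto bound atTop (nhds 0) := by
    have hpow := tendsto_pow_atTop_nhds_zero_of_lt_one (r := (4 * (39 / 40) ^ 64 : ℝ))
      (by norm_num) (by norm_num)
    simpa using (hpow.add (tendsto_inv_atTop_nhds_zero_nat.const_mul 4)).add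
      (tendsto_inv_atTop_nhds_zero_nat.const_mul ((1 - 2 * a) ^ 2)⁻¹)
  have hle : ∀ᶠ j : ℕ in atTop, ∀ n : ℕ, j * j ≤ n → n < (j + 1) * (j + 1) →
      branchProb l r n (polarizedSet Z T (2 ^ (b * n)))ᶜ s ≤ bound j := by
    filter_upwards [eventually_ge_atTop 66, eventually_succ_sq_add_one_le,
      tendsto_natCast_atTop_atTop.eventually_ge_atTop (65 * a / (a - b))]
      with j h66 hexp hj n hjn hnj
    rw [div_le_iff₀ (sub_pos.2 hba)] at hj
    obtain ⟨k, rfl⟩ := Nat.exists_eq_add_of_le (show 64 * j + j ≤ n by nlinarith)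
    have hjk : j ≤ k := by nlinarith
    have hjn' : (j : ℝ) * j ≤ 64 * j + j + k := by exact_mod_cast hjn
    have hnj' : (64 * j + j + k + 1 : ℝ) ≤ (j + 1) * (j + 1) := by exact_mod_cast hnj
    have hexponent : b * (64 * j + j + k : ℕ) ≤ a * k := by push_cast; nlinarith
    calc _ ≤ branchProb l r (64 * j + j + k) (polarizedSet Z T (2 ^ (a * k)))ᶜ s :=
          branchProb_mono (Set.compl_subset_compl.2 <| polarizedSet_anti Z T <|
            rpow_le_rpow_of_exponent_le one_le_two hexponent) _ _
      _ ≤ _ := h.branchProb_compl_polarizedSet_le_add ha (by omega) (by omega) (by linarith) s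
      _ ≤ bound j := by
          have : (0 : ℝ) < j := by exact_mod_cast (by omega : 0 < j)
          rw [mul_inv]
          simp only [bound]
          gcongr
  have hsqrt : Tendsto Nat.sqrt atTop atTop :=
    tendsto_atTop_atTop.2 fun j => ⟨j * j, fun n hn => Nat.le_sqrt.2 hn⟩
  refine squeeze_zero' (.of_forall fun n => branchProb_nonneg _ _ _) ?_
    (hbound.comp hsqrt)
  filter_upwards [hsqrt.eventually hle] with n hn
  exact hn n (Nat.sqrt_le n) (Nat.lt_succ_sqrt n)

end IsPolarizing

end Branching

/-! ### The chain rule -/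

section ChainRule

variable {Ω β : Type*}

/-- The first `l` bits of the process `A`. -/
def prefixOf (A : ℕ → Ω → ZMod 2) (l : ℕ) (ω : Ω) : Fin l → ZMod 2 := fun j => A j ω

lemma prefixOf_eq_iff {A : ℕ → Ω → ZMod 2} {l : ℕ} {ω ω' : Ω} :
    prefixOf A l ω = prefixOf A l ω' ↔ ∀ j < l, A j ω = A j ω' :=
  funext_iff.trans Fin.forall_iff

lemma prefixOf_succ_eq_iff {A : ℕ → Ω → ZMod 2} {l : ℕ} {ω ω' : Ω} :
    prefixOf A (l + 1) ω = prefixOf A (l + 1) ω' ↔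
      (A l ω, prefixOf A l ω) = (A l ω', prefixOf A l ω') := by
  rw [Prod.mk.injEq, prefixOf_eq_iff, prefixOf_eq_iff, Nat.forall_lt_succ_right, and_comm]

variable [Fintype Ω] [Fintype β]

/-- For an outcome with law `p`, the joint law of the `i`-th bit of the process `A` and the side
information formed by the preceding bits. -/
def stepLaw (p : Ω → ℝ) (A : ℕ → Ω → ZMod 2) (i : ℕ) : ZMod 2 × (Fin i → ZMod 2) → ℝ :=
  push p fun ω => (A i ω, prefixOf A i ω)

lemma IsPMF.stepLaw {p : Ω → ℝ} (hp : IsPMF p) (A : ℕ → Ω → ZMod 2) (i : ℕ) :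
    IsPMF (stepLaw p A i) :=
  hp.push _

lemma condSum_splitEntropy_stepLaw (p : Ω → ℝ) (A : ℕ → Ω → ZMod 2) (i : ℕ) :
    condSum splitEntropy (stepLaw p A i) =
      Hsh (push p (prefixOf A (i + 1))) - Hsh (push p (prefixOf A i)) := by
  rw [condSum_splitEntropy, stepLaw, push_push,
    Hsh_push_congr p fun _ _ => prefixOf_succ_eq_iff]

lemma Hsh_of_unique [Unique β] {q : β → ℝ} (hq : IsPMF q) : Hsh q = 0 := by
  have h : q default = 1 := (Fintype.sum_unique q).symm.trans hq.2
  simp [Hsh, h]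

lemma Hsh_push_prefixOf {p : Ω → ℝ} (hp : IsPMF p) (A : ℕ → Ω → ZMod 2) (l : ℕ) :
    Hsh (push p (prefixOf A l)) = ∑ i ∈ range l, condSum splitEntropy (stepLaw p A i) := by
  simp only [condSum_splitEntropy_stepLaw]
  rw [sum_range_sub fun i => Hsh (push p (prefixOf A i)), Hsh_of_unique (hp.push (prefixOf A 0)),
    sub_zero]

lemma sum_condSum_stepLaw_le {p : Ω → ℝ} (hp : IsPMF p) (A : ℕ → Ω → ZMod 2) (S : Finset ℕ)
    {g : Ω → β} (hg : ∀ ω ω', g ω = g ω' ↔ ∀ i ∈ S, A i ω = A i ω') :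
    ∑ i ∈ S, condSum splitEntropy (stepLaw p A i) ≤ Hsh (push p g) := by
  obtain ⟨l, hl⟩ := S.exists_nat_subset_range
  let masked (i : ℕ) (ω : Ω) : ZMod 2 := if i ∈ S then A i ω else 0
  have hkernel (ω ω' : Ω) : g ω = g ω' ↔ prefixOf masked l ω = prefixOf masked l ω' := by
    rw [hg, prefixOf_eq_iff]
    refine ⟨fun h j _ => ?_, fun h i hi => by simpa [masked, hi] using h i (mem_range.1 (hl hi))⟩
    by_cases hj : j ∈ S
    · simpa [masked, hj] using h j hj
    · simp [masked, hj]
  have hstep {i : ℕ} (hi : i ∈ S) :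
      condSum splitEntropy (stepLaw p A i) ≤ condSum splitEntropy (stepLaw p masked i) := by
    refine (condSum_splitEntropy_le_push (hp.stepLaw A i).1
      fun y (j : Fin i) => if (j : ℕ) ∈ S then y j else 0).trans_eq ?_
    rw [stepLaw, push_push, stepLaw]
    simp only [Prod.map_apply, id_eq, prefixOf, masked, hi, if_true]
    rfl
  rw [Hsh_push_congr p hkernel, Hsh_push_prefixOf hp]
  exact (sum_le_sum fun i hi => hstep hi).trans <| sum_le_sum_of_subset_of_nonneg hl
    fun i _ _ => condSum_splitEntropy_nonneg (hp.stepLaw masked i).1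

end ChainRule

/-! ### The polar transform -/

section PolarTransform

/-- The indexing `(i, j) ↦ 2 * i + j` of the Kronecker factors in `polarG`. -/
def polarIndexEquiv (n : ℕ) : Fin (2 ^ n) × Fin 2 ≃ Fin (2 ^ (n + 1)) :=
  finProdFinEquiv.trans (finCongr (pow_succ 2 n).symm)

/-- The separation of a vector into its entries at even and at odd positions. -/
def evenOddEquiv (n : ℕ) :
    (Fin (2 ^ (n + 1)) → ZMod 2) ≃ (Fin (2 ^ n) → ZMod 2) × (Fin (2 ^ n) → ZMod 2) where
  toFun x := (fun i => x (polarIndexEquiv n (i, 0)), fun i => x (polarIndexEquiv n (i, 1)))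
  invFun w k := ![w.1, w.2] ((polarIndexEquiv n).symm k).2 ((polarIndexEquiv n).symm k).1
  left_inv x := by
    ext k
    obtain ⟨⟨i, j⟩, rfl⟩ := (polarIndexEquiv n).surjective k
    fin_cases j <;> simp
  right_inv w := by simp

/-- The `i`-th bit of the polar transform of `x`. The index is a natural number, and the transform
is continued by zero. -/
def polarBit (n i : ℕ) (x : Fin (2 ^ n) → ZMod 2) : ZMod 2 :=
  if h : i < 2 ^ n then Matrix.vecMul x (polarG n) ⟨i, h⟩ else 0

variable {pX : ZMod 2 → ℝ}

lemma polarIndexEquiv_val (n : ℕ) (i : Fin (2 ^ n)) (j : Fin 2) :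
    (polarIndexEquiv n (i, j) : ℕ) = 2 * i + j := by
  simp [polarIndexEquiv, add_comm]

lemma polarBit_val {n : ℕ} (i : Fin (2 ^ n)) (x : Fin (2 ^ n) → ZMod 2) :
    polarBit n i x = Matrix.vecMul x (polarG n) i := by
  simp [polarBit]

lemma push_iid_evenOddEquiv (pX : ZMod 2 → ℝ) (n : ℕ) :
    push (iid pX (2 ^ (n + 1))) (evenOddEquiv n) =
      prodLaw (iid pX (2 ^ n)) (iid pX (2 ^ n)) := by
  ext w
  obtain ⟨x, rfl⟩ := (evenOddEquiv n).surjective w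
  rw [push_equiv_apply, Equiv.symm_apply_apply, iid, ← (polarIndexEquiv n).prod_comp,
    Fintype.prod_prod_type]
  simp only [Fin.prod_univ_two, prod_mul_distrib]
  rfl

lemma polarG_succ_apply (n : ℕ) (i' i : Fin (2 ^ n)) (j' j : Fin 2) :
    polarG (n + 1) (polarIndexEquiv n (i', j')) (polarIndexEquiv n (i, j)) =
      polarG n i' i * !![1, 0; 1, 1] j' j := by
  change Matrix.reindex (polarIndexEquiv n) (polarIndexEquiv n) _ _ _ = _
  rw [Matrix.reindex_apply, Matrix.submatrix_apply, Equiv.symm_apply_apply,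
    Equiv.symm_apply_apply, Matrix.kroneckerMap_apply]

lemma vecMul_polarG_succ (n : ℕ) (x : Fin (2 ^ (n + 1)) → ZMod 2) (i : Fin (2 ^ n)) (j : Fin 2) :
    Matrix.vecMul x (polarG (n + 1)) (polarIndexEquiv n (i, j)) =
      Matrix.vecMul (evenOddEquiv n x).1 (polarG n) i * !![1, 0; 1, 1] 0 j +
        Matrix.vecMul (evenOddEquiv n x).2 (polarG n) i * !![1, 0; 1, 1] 1 j := by
  simp only [Matrix.vecMul, dotProduct, ← (polarIndexEquiv n).sum_comp, Fintype.sum_prod_type,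
    Fin.sum_univ_two, polarG_succ_apply, sum_add_distrib, sum_mul, mul_assoc]
  rfl

lemma polarBit_even (n i : ℕ) (x : Fin (2 ^ (n + 1)) → ZMod 2) :
    polarBit (n + 1) (2 * i) x =
      polarBit n i (evenOddEquiv n x).1 + polarBit n i (evenOddEquiv n x).2 := by
  by_cases h : i < 2 ^ n
  · rw [show 2 * i = polarIndexEquiv n (⟨i, h⟩, 0) by simp [polarIndexEquiv_val], polarBit_val,
      vecMul_polarG_succ]
    simp [polarBit, h]
  · have h' : ¬2 * i < 2 ^ (n + 1) := by omega
    simp [polarBit, h, h']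

lemma polarBit_odd (n i : ℕ) (x : Fin (2 ^ (n + 1)) → ZMod 2) :
    polarBit (n + 1) (2 * i + 1) x = polarBit n i (evenOddEquiv n x).2 := by
  by_cases h : i < 2 ^ n
  · rw [show 2 * i + 1 = polarIndexEquiv n (⟨i, h⟩, 1) by simp [polarIndexEquiv_val],
      polarBit_val, vecMul_polarG_succ]
    simp [polarBit, h]
  · have h' : ¬2 * i + 1 < 2 ^ (n + 1) := by omega
    simp [polarBit, h, h']

lemma prefixOf_polarBit_even_eq_iff {n i : ℕ} {x y : Fin (2 ^ (n + 1)) → ZMod 2} :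
    prefixOf (polarBit (n + 1)) (2 * i) x = prefixOf (polarBit (n + 1)) (2 * i) y ↔
      Prod.map (prefixOf (polarBit n) i) (prefixOf (polarBit n) i) (evenOddEquiv n x) =
        Prod.map (prefixOf (polarBit n) i) (prefixOf (polarBit n) i) (evenOddEquiv n y) := by
  rw [Prod.ext_iff, Prod.map_fst, Prod.map_fst, Prod.map_snd, Prod.map_snd]
  simp only [prefixOf_eq_iff]
  refine ⟨fun h => ?_, fun ⟨hfst, hsnd⟩ j hj => ?_⟩
  · have hsnd (j : ℕ) (hj : j < i) := h (2 * j + 1) (by omega)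
    simp only [polarBit_odd] at hsnd
    refine ⟨fun j hj => ?_, hsnd⟩
    have hsum := h (2 * j) (by omega)
    rw [polarBit_even, polarBit_even, hsnd j hj] at hsum
    exact add_right_cancel hsum
  · obtain ⟨k, rfl | rfl⟩ := j.even_or_odd'
    · rw [polarBit_even, polarBit_even, hfst k (by omega), hsnd k (by omega)]
    · rw [polarBit_odd, polarBit_odd, hsnd k (by omega)]

lemma prefixOf_polarBit_injective (n : ℕ) : (prefixOf (polarBit n) (2 ^ n)).Injective := by
  induction n with
  | zero =>
    intro x y h
    ext i
    have hi := congrFun h i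
    simp only [prefixOf, polarBit_val] at hi
    simpa [polarG] using hi
  | succ n ih =>
    intro x y h
    have heven : prefixOf (polarBit (n + 1)) (2 * 2 ^ n) x =
        prefixOf (polarBit (n + 1)) (2 * 2 ^ n) y :=
      prefixOf_eq_iff.2 fun j hj => prefixOf_eq_iff.1 h j (by omega)
    exact (evenOddEquiv n).injective (ih.prodMap ih (prefixOf_polarBit_even_eq_iff.1 heven))

/-- The joint law of `A_i` and the side information `A^{i-1}`, for the polar transform `A` of
`2 ^ n` symbols of the source `pX`. -/
def polarStepLaw (pX : ZMod 2 → ℝ) (n i : ℕ) : ZMod 2 × (Fin i → ZMod 2) → ℝ :=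
  stepLaw (iid pX (2 ^ n)) (polarBit n) i

/-- The node of index `2 * i` at level `n + 1`, for the node `(n, i)` of the polarization tree. -/
def evenChild (s : ℕ × ℕ) : ℕ × ℕ := (s.1 + 1, 2 * s.2)

/-- The node of index `2 * i + 1` at level `n + 1`, for the node `(n, i)` of the polarization
tree. -/
def oddChild (s : ℕ × ℕ) : ℕ × ℕ := (s.1 + 1, 2 * s.2 + 1)

/-- The parameter of the `i`-th bit at level `n` that `φ` defines, as a function of the node
`(n, i)` of the polarization tree. -/
def polarParam (φ : ℝ → ℝ → ℝ) (pX : ZMod 2 → ℝ) (s : ℕ × ℕ) : ℝ :=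
  condSum φ (polarStepLaw pX s.1 s.2)

lemma IsPMF.polarStepLaw (hX : IsPMF pX) (n i : ℕ) : IsPMF (polarStepLaw pX n i) :=
  (hX.iid _).stepLaw _ _

lemma prodLaw_polarStepLaw (pX : ZMod 2 → ℝ) (n i : ℕ) :
    prodLaw (polarStepLaw pX n i) (polarStepLaw pX n i) =
      push (iid pX (2 ^ (n + 1))) (fun x =>
        ((polarBit n i (evenOddEquiv n x).1, prefixOf (polarBit n) i (evenOddEquiv n x).1),
          (polarBit n i (evenOddEquiv n x).2, prefixOf (polarBit n) i (evenOddEquiv n x).2))) := by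
  rw [polarStepLaw, stepLaw, ← push_map_prodLaw, ← push_iid_evenOddEquiv, push_push]
  rfl

lemma polarParam_evenChild {φ : ℝ → ℝ → ℝ} (hφ : φ 0 0 = 0) (pX : ZMod 2 → ℝ) (n i : ℕ) :
    polarParam φ pX (evenChild (n, i)) = condSum φ (minusLaw (polarStepLaw pX n i)) := by
  rw [← push_prodLaw_eq_minusLaw, prodLaw_polarStepLaw, push_push, polarParam, polarStepLaw,
    stepLaw]
  simp only [evenChild, polarBit_even]
  exact condSum_push_congr hφ _ _ fun _ _ => prefixOf_polarBit_even_eq_iff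

lemma polarParam_oddChild {φ : ℝ → ℝ → ℝ} (hφ : φ 0 0 = 0) (pX : ZMod 2 → ℝ) (n i : ℕ) :
    polarParam φ pX (oddChild (n, i)) = condSum φ (plusLaw (polarStepLaw pX n i)) := by
  rw [← push_prodLaw_eq_plusLaw, prodLaw_polarStepLaw, push_push, polarParam, polarStepLaw,
    stepLaw]
  simp only [oddChild, polarBit_odd]
  refine condSum_push_congr hφ _ _ fun x y => ?_
  rw [prefixOf_succ_eq_iff, Prod.mk.injEq, Prod.mk.injEq, prefixOf_polarBit_even_eq_iff,
    polarBit_even, polarBit_even]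
  rfl

lemma isPolarizing_polarParam (hX : IsPMF pX) :
    IsPolarizing evenChild oddChild (polarParam bhattacharyya pX) (polarParam bias pX) := by
  have hZ : bhattacharyya 0 0 = 0 := by simp [bhattacharyya]
  have hT : bias 0 0 = 0 := by simp [bias]
  have hq (s : ℕ × ℕ) : IsPMF (polarStepLaw pX s.1 s.2) := hX.polarStepLaw s.1 s.2
  constructor <;> intro s
  · exact sum_nonneg fun y _ => bhattacharyya_nonneg _ _
  · exact sum_nonneg fun y _ => bias_nonneg _ _
  · exact condSum_bhattacharyya_sq_add_condSum_bias_sq_le (hq s)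
  · exact (polarParam_oddChild hZ pX s.1 s.2).trans_le
      (condSum_bhattacharyya_plusLaw (hq s).1).le
  · exact (polarParam_evenChild hZ pX s.1 s.2).trans_le
      (condSum_bhattacharyya_minusLaw_le (hq s))
  · exact (polarParam_evenChild hT pX s.1 s.2).trans_le (condSum_bias_minusLaw _).le
  · exact (polarParam_oddChild hT pX s.1 s.2).trans_le (condSum_bias_plusLaw_le (hq s))

lemma polarCondH_eq (pX : ZMod 2 → ℝ) (n : ℕ) (i : Fin (2 ^ n)) :
    polarCondH pX n i = condSum splitEntropy (polarStepLaw pX n i) := by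
  rw [polarStepLaw, condSum_splitEntropy_stepLaw, polarCondH, polarA, push_push, push_push]
  have h {l : ℕ} (hl : l ≤ 2 ^ n) : prefixOf (polarBit n) l =
      fun x j => Matrix.vecMul x (polarG n) (Fin.castLE hl j) := by
    ext x j
    exact polarBit_val (Fin.castLE hl j) x
  rw [h i.isLt, h i.isLt.le]

lemma polarCondH_nonneg (hX : IsPMF pX) (n : ℕ) (i : Fin (2 ^ n)) : 0 ≤ polarCondH pX n i :=
  (condSum_splitEntropy_nonneg (hX.polarStepLaw n i).1).trans_eq (polarCondH_eq pX n i).symm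

lemma polarCondH_le_one (hX : IsPMF pX) (n : ℕ) (i : Fin (2 ^ n)) : polarCondH pX n i ≤ 1 :=
  (polarCondH_eq pX n i).trans_le (condSum_splitEntropy_le_one (hX.polarStepLaw n i))

lemma sum_polarCondH (hX : IsPMF pX) (n : ℕ) : ∑ i, polarCondH pX n i = 2 ^ n * Hsh pX := by
  simp only [polarCondH_eq, polarStepLaw]
  rw [Fin.sum_univ_eq_sum_range fun i =>
      condSum splitEntropy (stepLaw (iid pX (2 ^ n)) (polarBit n) i),
    ← Hsh_push_prefixOf (hX.iid _), Hsh_push_of_injective _ (prefixOf_polarBit_injective n),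
    Hsh_iid hX]
  push_cast
  rfl

lemma sum_polarCondH_le_Hsh_push {β : Type*} [Fintype β] (hX : IsPMF pX) {n : ℕ}
    (S : Finset (Fin (2 ^ n))) {g : (Fin (2 ^ n) → ZMod 2) → β}
    (hg : ∀ x y, g x = g y ↔
      ∀ i ∈ S, Matrix.vecMul x (polarG n) i = Matrix.vecMul y (polarG n) i) :
    ∑ i ∈ S, polarCondH pX n i ≤ Hsh (push (iid pX (2 ^ n)) g) := by
  refine (Eq.le ?_).trans <| sum_condSum_stepLaw_le (hX.iid _) (polarBit n)
    (S.map Fin.valEmbedding) fun x y => (hg x y).trans ?_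
  · simp only [sum_map, polarCondH_eq, polarStepLaw]
    rfl
  · simp [polarBit_val]

lemma sum_range_two_mul {M : Type*} [AddCommMonoid M] (f : ℕ → M) (m : ℕ) :
    ∑ j ∈ range (2 * m), f j = ∑ j ∈ range m, (f (2 * j) + f (2 * j + 1)) := by
  induction m with
  | zero => simp
  | succ m ih => rw [mul_add_one, sum_range_succ, sum_range_succ, ih, sum_range_succ, add_assoc]

lemma branchAvg_pow_root (n : ℕ) (f : ℕ × ℕ → ℝ) :
    (branchAvg evenChild oddChild ^ n) f (0, 0) = (∑ i ∈ range (2 ^ n), f (n, i)) / 2 ^ n := by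
  induction n generalizing f with
  | zero => simp
  | succ n ih =>
    have hstep (i : ℕ) : branchAvg evenChild oddChild f (n, i) =
        (f (n + 1, 2 * i) + f (n + 1, 2 * i + 1)) / 2 := by
      simpa [evenChild, oddChild] using
        branchAvg_pow_succ_apply (l := evenChild) (r := oddChild) 0 f (n, i)
    rw [pow_succ, Module.End.mul_apply, ih, pow_succ' 2, sum_range_two_mul,
      sum_congr rfl fun i _ => hstep i, ← sum_div, div_div, pow_succ']

lemma notMem_polarizedSet_of_mem_sdiff (hX : IsPMF pX) {β e : ℝ} {n : ℕ}
    (he : 4 * (2 : ℝ) ^ (-e) ≤ polarδ n β) {i : Fin (2 ^ n)}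
    (hi : i ∈ polarH pX β n \ polarV pX β n) :
    (n, (i : ℕ)) ∉ polarizedSet (polarParam bhattacharyya pX) (polarParam bias pX) e := by
  have hq := hX.polarStepLaw n i
  simp only [polarH, polarV, Finset.mem_sdiff, mem_filter, mem_univ, true_and, not_lt,
    polarCondH_eq] at hi
  rintro (hZ | hT)
  · rw [polarParam] at hZ
    linarith [hi.1, condSum_splitEntropy_le_four_mul hq.1]
  · rw [polarParam] at hT
    have : (0 : ℝ) < 2 ^ (-e) := by positivity
    linarith [hi.2, one_sub_condSum_bias_le hq]

lemma card_polarH_sdiff_polarV_div_le (hX : IsPMF pX) {β e : ℝ} {n : ℕ}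
    (he : 4 * (2 : ℝ) ^ (-e) ≤ polarδ n β) :
    ((polarH pX β n \ polarV pX β n).card : ℝ) / (2 ^ n : ℕ) ≤
      branchProb evenChild oddChild n
        (polarizedSet (polarParam bhattacharyya pX) (polarParam bias pX) e)ᶜ (0, 0) := by
  set S := polarizedSet (polarParam bhattacharyya pX) (polarParam bias pX) e
  rw [branchProb, branchAvg_pow_root, ← Fin.sum_univ_eq_sum_range fun i => Sᶜ.indicator 1 (n, i)]
  push_cast
  gcongr
  rw [card_eq_sum_ones, Nat.cast_sum]
  refine (sum_le_sum fun i hi => ?_).trans <| sum_le_sum_of_subset_of_nonneg (subset_univ _)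
    fun i _ _ => Set.indicator_nonneg (fun _ _ => zero_le_one) _
  rw [Set.indicator_of_mem (notMem_polarizedSet_of_mem_sdiff hX he hi)]
  simp

lemma eventually_rpow_add_two_le {a b : ℝ} (ha : 0 < a) (hab : a < b) :
    ∀ᶠ n : ℕ in atTop, (2 : ℝ) ^ (a * n) + 2 ≤ 2 ^ (b * n) := by
  have hgap : Tendsto (fun n : ℕ => ((2 : ℝ) ^ (b - a)) ^ n) atTop atTop :=
    tendsto_pow_atTop_atTop_of_one_lt (one_lt_rpow one_lt_two (sub_pos.2 hab))
  filter_upwards [hgap.eventually_ge_atTop 3] with n hn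
  have hsplit : (2 : ℝ) ^ (b * n) = 2 ^ (a * n) * (2 ^ (b - a)) ^ n := by
    rw [← rpow_natCast, ← rpow_mul two_pos.le, ← rpow_add two_pos]
    ring_nf
  have hone : (1 : ℝ) ≤ 2 ^ (a * n) := one_le_rpow one_le_two (by positivity)
  rw [hsplit]
  nlinarith

lemma tendsto_card_polarH_sdiff_polarV_div (hX : IsPMF pX) {β : ℝ} (hβ0 : 0 < β)
    (hβ : β < 1 / 2) :
    Tendsto (fun n : ℕ => ((polarH pX β n \ polarV pX β n).card : ℝ) / (2 ^ n : ℕ))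
      atTop (nhds 0) := by
  obtain ⟨b, hβb, hb⟩ := exists_between hβ
  refine squeeze_zero' (.of_forall fun n => by positivity) ?_
    ((isPolarizing_polarParam hX).tendsto_branchProb_compl_polarizedSet hb (0, 0))
  filter_upwards [eventually_rpow_add_two_le hβ0 hβb] with n hn
  refine card_polarH_sdiff_polarV_div_le hX ?_
  calc 4 * (2 : ℝ) ^ (-2 ^ (b * n) : ℝ) = 2 ^ (2 - 2 ^ (b * n) : ℝ) := by
        rw [sub_eq_add_neg, rpow_add two_pos]; norm_num
    _ ≤ 2 ^ (-2 ^ (β * n) : ℝ) := rpow_le_rpow_of_exponent_le one_le_two (by linarith)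
    _ = polarδ n β := by rw [polarδ, ← rpow_natCast 2 n, ← rpow_mul two_pos.le, mul_comm β]

end PolarTransform

section OneTimePad

variable {Ω β κ : Type*} [Fintype Ω] [Fintype β] [Fintype κ]

lemma push_prodLaw_add [AddCommGroup κ] (p : Ω → ℝ) (f : Ω → β) (a : Ω → κ) (c : ℝ) :
    push (prodLaw p fun _ : κ => c) (fun w => (f w.1, a w.1 + w.2)) =
      prodLaw (push p f) fun _ => c := by
  ext ⟨b, k⟩
  simp only [push, prodLaw, Fintype.sum_prod_type, Prod.mk.injEq, ite_and,
    ← eq_sub_iff_add_eq', sum_mul]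
  refine sum_congr rfl fun ω _ => ?_
  split_ifs with h <;> simp

lemma isPMF_const [Nonempty β] {c : ℝ} (hc : Fintype.card β = c) :
    IsPMF fun _ : β => 1 / c := by
  subst hc
  refine ⟨fun _ => by positivity, ?_⟩
  simp

lemma Hsh_const {c : ℝ} (hc : Fintype.card β = c) : Hsh (fun _ : β => 1 / c) = logb 2 c := by
  subst hc
  rcases isEmpty_or_nonempty β
  · simp [Hsh]
  · simp [Hsh]

end OneTimePad

/-! ### Decoding by maximal posterior probability -/

section Decoding

variable {Ω β : Type*} [Fintype Ω] [Fintype β]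

lemma sum_sub_le_sum_mul_logb {w : Ω → ℝ} (hw : ∀ ω, 0 ≤ w ω) {m : Ω} (hmax : ∀ ω, w ω ≤ w m) :
    ∑ ω, w ω - w m ≤ ∑ ω, w ω * (logb 2 (∑ ω', w ω') - logb 2 (w ω)) := by
  set W := ∑ ω, w ω
  have hmW : w m ≤ W := single_le_sum (fun ω _ => hw ω) (mem_univ m)
  rcases (hw m).eq_or_lt with hm | hm
  · have hzero (ω : Ω) : w ω = 0 := le_antisymm ((hmax ω).trans_eq hm.symm) (hw ω)
    simp [W, hzero]
  have hW : 0 < W := hm.trans_le hmW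
  have hlog : 1 - w m / W ≤ logb 2 W - logb 2 (w m) := by
    have hratio : w m / W ≤ 1 := (div_le_one hW).2 hmW
    have hlin := log_le_sub_one_of_pos (div_pos hm hW)
    rw [log_div hm.ne' hW.ne'] at hlin
    rw [logb, logb, ← sub_div, le_div_iff₀ (log_pos one_lt_two)]
    nlinarith [log_two_lt_d9]
  calc W - w m = ∑ ω, w ω * (1 - w m / W) := by
        rw [← sum_mul, mul_one_sub, mul_div_cancel₀ _ hW.ne']
    _ ≤ ∑ ω, w ω * (logb 2 W - logb 2 (w ω)) := sum_le_sum fun ω _ => by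
      rcases (hw ω).eq_or_lt with hω | hω
      · simp [← hω]
      · have := logb_le_logb_of_le one_lt_two hω (hmax ω)
        exact mul_le_mul_of_nonneg_left (by linarith) hω.le

lemma sum_sum_fiber {M : Type*} [AddCommMonoid M] {g : Ω → β} {F : β → Ω → M}
    (hF : ∀ b ω, b ≠ g ω → F b ω = 0) : ∑ b, ∑ ω, F b ω = ∑ ω, F (g ω) ω := by
  rw [sum_comm]
  exact sum_congr rfl fun ω _ => Fintype.sum_eq_single (g ω) fun b hb => hF b ω hb

lemma exists_decoder_error_le [DecidableEq Ω] [Nonempty Ω] {p : Ω → ℝ} (hp : ∀ ω, 0 ≤ p ω)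
    (g : Ω → β) :
    ∃ ψ : β → Ω, ∑ ω, p ω * (if ψ (g ω) = ω then 0 else 1) ≤ Hsh p - Hsh (push p g) := by
  let w (b : β) (ω : Ω) : ℝ := if g ω = b then p ω else 0
  have hw (b : β) (ω : Ω) : 0 ≤ w b ω := by dsimp only [w]; split_ifs <;> simp [hp ω]
  have hw_of_ne {b : β} {ω : Ω} (hb : b ≠ g ω) : w b ω = 0 := if_neg hb.symm
  have hw_fiber (ω : Ω) : w (g ω) ω = p ω := if_pos rfl
  choose ψ hψ using fun b => Finite.exists_max (w b)
  have hcorrect : ∑ b, w b (ψ b) = ∑ ω, if ψ (g ω) = ω then p ω else 0 := by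
    have hexpand (b : β) : w b (ψ b) = ∑ ω, if ψ b = ω then w b ω else 0 := by simp
    simp only [hexpand]
    rw [sum_sum_fiber (g := g) fun b ω hb => by simp [hw_of_ne hb]]
    simp only [hw_fiber]
  refine ⟨ψ, ?_⟩
  calc ∑ ω, p ω * (if ψ (g ω) = ω then 0 else 1)
      = ∑ b, (push p g b - w b (ψ b)) := by
        rw [sum_sub_distrib, sum_push, hcorrect, ← sum_sub_distrib]
        exact sum_congr rfl fun ω _ => by split_ifs <;> simp
    _ ≤ ∑ b, ∑ ω, w b ω * (logb 2 (push p g b) - logb 2 (w b ω)) :=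
        sum_le_sum fun b _ => sum_sub_le_sum_mul_logb (hw b) (hψ b)
    _ = ∑ ω, p ω * (logb 2 (push p g (g ω)) - logb 2 (p ω)) := by
        rw [sum_sum_fiber (g := g) fun b ω hb => by rw [hw_of_ne hb, zero_mul]]
        simp only [hw_fiber]
    _ = Hsh p - Hsh (push p g) := by
        rw [Hsh_push, Hsh]
        simp only [mul_sub, sum_sub_distrib]
        ring

end Decoding

/-! ### The polar encoder -/

section PolarEncoder

variable {pX : ZMod 2 → ℝ} {n : ℕ}

/-- The subvector `A^N[S]` of the polar transform of `x`. -/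
def polarBits (S : Finset (Fin (2 ^ n))) (x : Fin (2 ^ n) → ZMod 2) : S → ZMod 2 :=
  fun i => Matrix.vecMul x (polarG n) i

/-- The encoder `[A^N[V], A^N[D] ⊕ U]` of a source word and a seed `U` of `|D|` bits. -/
def polarEncoder (V D : Finset (Fin (2 ^ n))) (w : (Fin (2 ^ n) → ZMod 2) × (D → ZMod 2)) :
    (V → ZMod 2) × (D → ZMod 2) :=
  (polarBits V w.1, polarBits D w.1 + w.2)

/-- The joint law of the source word and of an independent uniform seed of `|D|` bits. -/
def sourceSeedLaw (pX : ZMod 2 → ℝ) (D : Finset (Fin (2 ^ n))) :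
    (Fin (2 ^ n) → ZMod 2) × (D → ZMod 2) → ℝ :=
  prodLaw (iid pX (2 ^ n)) fun _ => 1 / (2 : ℝ) ^ D.card

lemma card_bits {ι : Type*} [DecidableEq ι] (S : Finset ι) :
    (Fintype.card (S → ZMod 2) : ℝ) = 2 ^ S.card := by
  simp [ZMod.card]

lemma polarBits_eq_iff {S : Finset (Fin (2 ^ n))} {x y : Fin (2 ^ n) → ZMod 2} :
    polarBits S x = polarBits S y ↔
      ∀ i ∈ S, Matrix.vecMul x (polarG n) i = Matrix.vecMul y (polarG n) i :=
  funext_iff.trans Subtype.forall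

lemma IsPMF.sourceSeedLaw (hX : IsPMF pX) (D : Finset (Fin (2 ^ n))) :
    IsPMF (sourceSeedLaw pX D) :=
  (hX.iid _).prodLaw (isPMF_const (card_bits D))

lemma push_sourceSeedLaw_polarEncoder (pX : ZMod 2 → ℝ) (V D : Finset (Fin (2 ^ n))) :
    push (sourceSeedLaw pX D) (polarEncoder V D) =
      prodLaw (push (iid pX (2 ^ n)) (polarBits V)) fun _ => 1 / (2 : ℝ) ^ D.card :=
  push_prodLaw_add _ (polarBits V) (polarBits D) _

lemma KL_push_polarEncoder (hX : IsPMF pX) (V D : Finset (Fin (2 ^ n))) :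
    KL (push (sourceSeedLaw pX D) (polarEncoder V D)) (fun _ => 1 / (2 : ℝ) ^ (V.card + D.card)) =
      V.card - Hsh (push (iid pX (2 ^ n)) (polarBits V)) := by
  have hlog (k : ℕ) : logb 2 ((2 : ℝ) ^ k) = k := by simp [logb_pow]
  rw [KL_const ((hX.sourceSeedLaw D).push _) (by positivity), push_sourceSeedLaw_polarEncoder,
    Hsh_prodLaw ((hX.iid _).push _) (isPMF_const (card_bits D)), Hsh_const (card_bits D), hlog,
    hlog]
  push_cast
  ring

lemma KL_push_polarEncoder_nonneg (hX : IsPMF pX) (V D : Finset (Fin (2 ^ n))) :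
    0 ≤ KL (push (sourceSeedLaw pX D) (polarEncoder V D))
      (fun _ => 1 / (2 : ℝ) ^ (V.card + D.card)) := by
  refine KL_nonneg ((hX.sourceSeedLaw D).push _) (isPMF_const ?_)
    fun _ h => absurd h (by positivity)
  rw [Fintype.card_prod, Nat.cast_mul, card_bits, card_bits, pow_add]

lemma KL_push_polarEncoder_le (hX : IsPMF pX) (V D : Finset (Fin (2 ^ n))) :
    KL (push (sourceSeedLaw pX D) (polarEncoder V D)) (fun _ => 1 / (2 : ℝ) ^ (V.card + D.card)) ≤
      ∑ i ∈ V, (1 - polarCondH pX n i) := by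
  have hbits := sum_polarCondH_le_Hsh_push hX V fun _ _ => polarBits_eq_iff
  rw [KL_push_polarEncoder hX, sum_sub_distrib, sum_const, nsmul_eq_mul, mul_one]
  linarith

lemma exists_polarDecoder_error_le (hX : IsPMF pX) (V D : Finset (Fin (2 ^ n))) :
    ∃ ψ : ((V → ZMod 2) × (D → ZMod 2)) × (D → ZMod 2) → (Fin (2 ^ n) → ZMod 2),
      ∑ x, ∑ u, sourceSeedLaw pX D (x, u) * (if ψ (polarEncoder V D (x, u), u) = x then 0 else 1) ≤
        ∑ i ∈ (V ∪ D)ᶜ, polarCondH pX n i := by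
  have hbits := sum_polarCondH_le_Hsh_push hX (V ∪ D) (g := fun x => (polarBits V x, polarBits D x))
    fun x y => by
      rw [Prod.mk.injEq, polarBits_eq_iff, polarBits_eq_iff]
      simp only [mem_union, or_imp, forall_and]
  obtain ⟨ψ, hψ⟩ := exists_decoder_error_le (hX.iid (2 ^ n)).1
    fun x => (polarBits V x, polarBits D x)
  refine ⟨fun z => ψ (z.1.1, z.1.2 - z.2), ?_⟩
  have hentropy : Hsh (iid pX (2 ^ n)) =
      ∑ i ∈ V ∪ D, polarCondH pX n i + ∑ i ∈ (V ∪ D)ᶜ, polarCondH pX n i := by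
    rw [sum_add_sum_compl, sum_polarCondH hX, Hsh_iid hX]
    push_cast
    rfl
  refine (Eq.le (sum_congr rfl fun x _ => ?_)).trans (hψ.trans (by linarith))
  simp only [polarEncoder, sourceSeedLaw, prodLaw, add_sub_cancel_right]
  rw [← sum_mul, ← mul_sum, (isPMF_const (card_bits D)).2, mul_one]

end PolarEncoder

/-! ### Asymptotics -/

section Asymptotics

variable {pX : ZMod 2 → ℝ} {β : ℝ}

lemma polarδ_pos (n : ℕ) (β : ℝ) : 0 < polarδ n β := rpow_pos_of_pos two_pos _

lemma tendsto_two_pow_mul_polarδ (hβ0 : 0 < β) :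
    Tendsto (fun n : ℕ => (2 : ℝ) ^ n * polarδ n β) atTop (nhds 0) := by
  have hpow : Tendsto (fun n : ℕ => ((2 : ℝ) ^ n) ^ β) atTop atTop :=
    (tendsto_rpow_atTop hβ0).comp (tendsto_pow_atTop_atTop_of_one_lt one_lt_two)
  refine ((tendsto_rpow_mul_exp_neg_mul_atTop_nhds_zero (1 / β) (log 2)
    (log_pos one_lt_two)).comp hpow).congr fun n => ?_
  simp only [Function.comp_apply, polarδ]
  rw [← rpow_mul (by positivity), mul_one_div_cancel hβ0.ne', rpow_one, rpow_def_of_pos two_pos,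
    neg_mul_comm]

lemma tendsto_polarδ (hβ0 : 0 < β) : Tendsto (fun n : ℕ => polarδ n β) atTop (nhds 0) :=
  squeeze_zero (fun n => (polarδ_pos n β).le)
    (fun n => le_mul_of_one_le_left (polarδ_pos n β).le (one_le_pow₀ one_le_two))
    (tendsto_two_pow_mul_polarδ hβ0)

lemma sum_le_two_pow_mul_polarδ {n : ℕ} {S : Finset (Fin (2 ^ n))} {f : Fin (2 ^ n) → ℝ}
    (hf : ∀ i ∈ S, f i ≤ polarδ n β) : ∑ i ∈ S, f i ≤ 2 ^ n * polarδ n β := by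
  have hcard : (S.card : ℝ) ≤ 2 ^ n := by exact_mod_cast card_finset_fin_le S
  calc ∑ i ∈ S, f i ≤ S.card * polarδ n β := by
        simpa only [nsmul_eq_mul] using sum_le_card_nsmul S f _ hf
    _ ≤ 2 ^ n * polarδ n β := by gcongr; exact (polarδ_pos n β).le

lemma sum_polarV_one_sub_polarCondH_le (pX : ZMod 2 → ℝ) (β : ℝ) (n : ℕ) :
    ∑ i ∈ polarV pX β n, (1 - polarCondH pX n i) ≤ 2 ^ n * polarδ n β :=
  sum_le_two_pow_mul_polarδ fun i hi => by linarith [(mem_filter.1 hi).2]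

lemma sum_compl_polarCondH_le (pX : ZMod 2 → ℝ) (β : ℝ) (n : ℕ) :
    ∑ i ∈ (polarV pX β n ∪ (polarH pX β n \ polarV pX β n))ᶜ, polarCondH pX n i ≤
      2 ^ n * polarδ n β := by
  refine sum_le_two_pow_mul_polarδ fun i hi => ?_
  rw [union_sdiff_self_eq_union, mem_compl, notMem_union] at hi
  simpa [polarH] using hi.2

lemma card_polarV_le (hX : IsPMF pX) (β : ℝ) (n : ℕ) :
    ((polarV pX β n).card : ℝ) ≤ 2 ^ n * (Hsh pX + polarδ n β) := by
  have hV := sum_polarV_one_sub_polarCondH_le pX β n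
  have hsub := sum_le_univ_sum_of_nonneg (s := polarV pX β n) (polarCondH_nonneg hX n)
  rw [sum_sub_distrib, sum_const, nsmul_eq_mul, mul_one] at hV
  rw [sum_polarCondH hX] at hsub
  linarith

lemma two_pow_mul_sub_le_card (hX : IsPMF pX) (β : ℝ) (n : ℕ) :
    2 ^ n * (Hsh pX - polarδ n β) ≤
      ((polarV pX β n).card : ℝ) + ((polarH pX β n \ polarV pX β n).card : ℝ) := by
  set S := polarV pX β n ∪ (polarH pX β n \ polarV pX β n) with hS
  have hcompl : ∑ i ∈ Sᶜ, polarCondH pX n i ≤ _ := sum_compl_polarCondH_le pX β n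
  have hin : ∑ i ∈ S, polarCondH pX n i ≤ S.card := by
    simpa using sum_le_card_nsmul S _ 1 fun i _ => polarCondH_le_one hX n i
  have htotal := sum_add_sum_compl S (polarCondH pX n)
  rw [sum_polarCondH hX] at htotal
  rw [← Nat.cast_add, ← card_union_of_disjoint disjoint_sdiff, ← hS]
  linarith

lemma tendsto_card_polarV_add_card_div (hX : IsPMF pX) (hβ0 : 0 < β) (hβ : β < 1 / 2) :
    Tendsto (fun n : ℕ => (((polarV pX β n).card + (polarH pX β n \ polarV pX β n).card : ℕ) : ℝ) /
      (2 ^ n : ℕ)) atTop (nhds (Hsh pX)) := by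
  have hδ := tendsto_polarδ hβ0
  have hlower : Tendsto (fun n => Hsh pX - polarδ n β) atTop (nhds (Hsh pX)) := by
    simpa using hδ.const_sub (Hsh pX)
  have hupper : Tendsto (fun n => Hsh pX + polarδ n β +
      ((polarH pX β n \ polarV pX β n).card : ℝ) / (2 ^ n : ℕ)) atTop (nhds (Hsh pX)) := by
    simpa using (hδ.const_add (Hsh pX)).add (tendsto_card_polarH_sdiff_polarV_div hX hβ0 hβ)
  refine tendsto_of_tendsto_of_tendsto_of_le_of_le hlower hupper (fun n => ?_) fun n => ?_
  · push_cast
    rw [le_div_iff₀' (by positivity)]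
    exact two_pow_mul_sub_le_card hX β n
  · push_cast
    rw [add_div]
    gcongr
    rw [div_le_iff₀' (by positivity)]
    exact card_polarV_le hX β n

end Asymptotics

/-- Proposition 4: polar-code-based uniform compression codes achieve
any rate `R > H(X)` with vanishing seed rate. -/
theorem statement9 (pX : ZMod 2 → ℝ) (hX : IsPMF pX)
    (β : ℝ) (hβ0 : 0 < β) (hβ : β < 1 / 2)
    (R : ℝ) (hR : Hsh pX < R) :
    -- seed rate `|H_X \ V_X| / N → 0`
    Tendsto (fun (n : ℕ) =>
        (((polarH pX β n) \ (polarV pX β n)).card : ℝ) / (2 ^ n : ℕ)) atTop (nhds 0) ∧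
    -- output length `(1/N)(|V_X| + |H_X \ V_X|) → H(X)`
    Tendsto (fun (n : ℕ) =>
        (((polarV pX β n).card + ((polarH pX β n) \ (polarV pX β n)).card : ℕ) : ℝ)
          / (2 ^ n : ℕ)) atTop (nhds (Hsh pX)) ∧
    -- and `≤ R` eventually
    (∀ᶠ (n : ℕ) in atTop,
      (((polarV pX β n).card + ((polarH pX β n) \ (polarV pX β n)).card : ℕ) : ℝ)
        / (2 ^ n : ℕ) ≤ R) ∧
    -- KL divergence between the encoder output and the uniform distribution tends to 0
    Tendsto (fun (n : ℕ) =>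
        KL (push
              (fun xu : (Fin (2 ^ n) → ZMod 2) ×
                        (((polarH pX β n) \ (polarV pX β n) : Finset (Fin (2 ^ n))) → ZMod 2) =>
                iid pX (2 ^ n) xu.1 *
                  (1 / (2:ℝ) ^ ((polarH pX β n) \ (polarV pX β n)).card))
              (fun xu =>
                ((fun i : (polarV pX β n) => Matrix.vecMul xu.1 (polarG n) i.1),
                 (fun i : ((polarH pX β n) \ (polarV pX β n) : Finset (Fin (2 ^ n))) =>
                    Matrix.vecMul xu.1 (polarG n) i.1 + xu.2 i))))
           (fun _ => 1 / (2:ℝ) ^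
              ((polarV pX β n).card + ((polarH pX β n) \ (polarV pX β n)).card)))
      atTop (nhds 0) ∧
    -- existence of decoders (using the encoder output and the shared seed) with
    -- vanishing error probability
    ∃ ψ : (n : ℕ) →
        (((polarV pX β n) → ZMod 2) ×
           ((((polarH pX β n) \ (polarV pX β n) : Finset (Fin (2 ^ n)))) → ZMod 2)) ×
          ((((polarH pX β n) \ (polarV pX β n) : Finset (Fin (2 ^ n)))) → ZMod 2) →
        (Fin (2 ^ n) → ZMod 2),
      Tendsto (fun (n : ℕ) =>
          ∑ x : Fin (2 ^ n) → ZMod 2,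
            ∑ u : (((polarH pX β n) \ (polarV pX β n) : Finset (Fin (2 ^ n)))) → ZMod 2,
              iid pX (2 ^ n) x * (1 / (2:ℝ) ^ ((polarH pX β n) \ (polarV pX β n)).card) *
                (if ψ n
                      (((fun i : (polarV pX β n) => Matrix.vecMul x (polarG n) i.1),
                        (fun i : ((polarH pX β n) \ (polarV pX β n) : Finset (Fin (2 ^ n))) =>
                          Matrix.vecMul x (polarG n) i.1 + u i)), u) = x
                 then 0 else 1))
        atTop (nhds 0) := by
  have hrate := tendsto_card_polarV_add_card_div hX hβ0 hβ
  have hδ := tendsto_two_pow_mul_polarδ hβ0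
  choose ψ hψ using fun n =>
    exists_polarDecoder_error_le hX (polarV pX β n) (polarH pX β n \ polarV pX β n)
  refine ⟨tendsto_card_polarH_sdiff_polarV_div hX hβ0 hβ, hrate, hrate.eventually_le_const hR,
    squeeze_zero (fun n => KL_push_polarEncoder_nonneg hX _ _) (fun n => ?_) hδ,
    ψ, squeeze_zero (fun n => ?_) (fun n => ?_) hδ⟩
  · exact (KL_push_polarEncoder_le hX _ _).trans (sum_polarV_one_sub_polarCondH_le pX β n)
  · refine sum_nonneg fun x _ => sum_nonneg fun u _ => ?_
    have := (hX.iid (2 ^ n)).1 x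
    positivity
  · exact (hψ n).trans (sum_compl_polarCondH_le pX β n)
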